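/- arXiv:1202.6259 — 4 statements merged into one kernel-verified Lean document; each statement's English description precedes it below -/
import Mathlib

section
/- For each nonempty finite set S, the posterior mapping ψ_S is 1-Lipschitz from (Δ(K×S), ‖·‖₁) to (Δ_f(X), d_*): for all π, π' ∈ Δ(K×S), d_*(ψ_S(π), ψ_S(π')) ≤ ‖π − π'‖₁. Moreover, d_* is the largest distance with this property: for all u, v ∈ Δ_f(X), d_*(u,v) = inf{ ‖π − π'‖₁ : S a nonempty finite set, π, π' ∈ Δ(K×S), ψ_S(π) = u, ψ_S(π') = v }, and this infimum is attained. -/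
open Set MeasureTheory

namespace Stmt12

variable (K : Type*) [Fintype K]

/-- The simplex `Δ(K)` of probability vectors on `K`, inside `K → ℝ`
(endowed with the ℓ¹ norm, written explicitly as sums of absolute values below). -/
def Δ : Set (K → ℝ) := {p | (∀ k, 0 ≤ p k) ∧ ∑ k, p k = 1}

/-- `D₁ = {f ∈ C(Δ(K),ℝ) : ∀ x,y, ∀ a,b ≥ 0, a·f(x) − b·f(y) ≤ ‖a·x − b·y‖₁}`. -/
def D1 : Set C(Δ K, ℝ) :=
  {f | ∀ x y : Δ K, ∀ a b : ℝ, 0 ≤ a → 0 ≤ b →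
    a * f x - b * f y ≤ ∑ k, |a * (x : K → ℝ) k - b * (y : K → ℝ) k|}

/-- The pairing `u(f) = ∫_X f du`. -/
noncomputable def pairing (u : ProbabilityMeasure (Δ K)) (f : C(Δ K, ℝ)) : ℝ :=
  ∫ p, f p ∂(u : Measure (Δ K))

/-- The distance `d_*(u,v) = sup_{f ∈ D₁} (u(f) − v(f))`. -/
noncomputable def dstar (u v : ProbabilityMeasure (Δ K)) : ℝ :=
  sSup ((fun f => pairing K u f - pairing K v f) '' D1 K)

variable (S : Type*) [Fintype S]

/-- `π` is a probability vector on `K × S`. -/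
def IsProbVec (π : K × S → ℝ) : Prop := (∀ x, 0 ≤ π x) ∧ ∑ x, π x = 1

/-- `π(s) = Σ_k π(k,s)`. -/
def marg (π : K × S → ℝ) (s : S) : ℝ := ∑ k, π (k, s)

/-- `post` is a version of the posteriors of `π` on `K` given `s ∈ S`:
`p^k(s) = π(k,s)/π(s)` whenever `π(s) > 0` (arbitrary otherwise). -/
def IsPosterior (π : K × S → ℝ) (post : S → Δ K) : Prop :=
  ∀ s, marg K S π s ≠ 0 → ∀ k, (post s : K → ℝ) k * marg K S π s = π (k, s)

/-- The image `ψ_S(π) = Σ_{s ∈ S} π(s)·δ_{p(s)}` of the posterior mapping, as a Borel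
measure on `X = Δ(K)`. -/
noncomputable def ψ (π : K × S → ℝ) (post : S → Δ K) : Measure (Δ K) :=
  ∑ s : S, ENNReal.ofReal (marg K S π s) • Measure.dirac (post s)

end Stmt12

namespace Stmt12Aux
open Stmt12

lemma pairing_eq {K : Type*} [Fintype K] {ι : Type*} [Fintype ι] (w : ι → ℝ) (hw : ∀ i, 0 ≤ w i)
    (p : ι → Δ K) (μ : ProbabilityMeasure (Δ K))
    (h : (μ : Measure (Δ K)) = ∑ i, ENNReal.ofReal (w i) • Measure.dirac (p i)) (f : C(Δ K, ℝ)) :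
    pairing K μ f = ∑ i, w i * f (p i) := by
  unfold pairing
  rw [h, integral_finsetSum_measure]
  · refine Finset.sum_congr rfl fun i _ => ?_
    rw [integral_smul_measure, integral_dirac, ENNReal.toReal_ofReal (hw i), smul_eq_mul]
  · intro i _
    refine Integrable.smul_measure ?_ ENNReal.ofReal_ne_top
    exact integrable_dirac (by simp)

lemma sum_w {K : Type*} [Fintype K] {ι : Type*} [Fintype ι] (w : ι → ℝ) (hw : ∀ i, 0 ≤ w i)
    (p : ι → Δ K) (μ : ProbabilityMeasure (Δ K))
    (h : (μ : Measure (Δ K)) = ∑ i, ENNReal.ofReal (w i) • Measure.dirac (p i)) :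
    ∑ i, w i = 1 := by
  have h1 := pairing_eq w hw p μ h (ContinuousMap.const _ 1)
  simpa [pairing] using h1.symm

lemma part1 {K : Type*} [Fintype K] {S : Type*} [Fintype S] (π π' : K × S → ℝ)
    (hπ : IsProbVec K S π) (hπ' : IsProbVec K S π') (post post' : S → Δ K)
    (hp : IsPosterior K S π post) (hp' : IsPosterior K S π' post')
    (μ μ' : ProbabilityMeasure (Δ K))
    (hμ : (μ : Measure (Δ K)) = ψ K S π post) (hμ' : (μ' : Measure (Δ K)) = ψ K S π' post')
    (f : C(Δ K, ℝ)) (hf : f ∈ D1 K) :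
    pairing K μ f - pairing K μ' f ≤ ∑ x : K × S, |π x - π' x| := by
  have key : ∀ (ρ : K × S → ℝ), IsProbVec K S ρ → ∀ q : S → Δ K, IsPosterior K S ρ q →
      ∀ s k, marg K S ρ s * (q s : K → ℝ) k = ρ (k, s) := by
    intro ρ hρ q hq s k
    by_cases h0 : marg K S ρ s = 0
    · have := (Finset.sum_eq_zero_iff_of_nonneg (fun k _ => hρ.1 (k, s))).1 h0 k (Finset.mem_univ _)
      rw [h0, this, zero_mul]
    · rw [mul_comm]; exact hq s h0 k
  have mn : ∀ (ρ : K × S → ℝ), IsProbVec K S ρ → ∀ s, 0 ≤ marg K S ρ s := fun ρ hρ s =>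
    Finset.sum_nonneg fun k _ => hρ.1 _
  rw [pairing_eq _ (mn π hπ) post μ hμ, pairing_eq _ (mn π' hπ') post' μ' hμ',
    ← Finset.sum_sub_distrib, Fintype.sum_prod_type_right]
  refine Finset.sum_le_sum fun s _ => ?_
  refine (hf (post s) (post' s) _ _ (mn π hπ s) (mn π' hπ' s)).trans (le_of_eq ?_)
  refine Finset.sum_congr rfl fun k _ => ?_
  rw [key π hπ post hp, key π' hπ' post' hp']

lemma zero_mem {K : Type*} [Fintype K] : (0 : C(Δ K, ℝ)) ∈ D1 K := by
  intro x y a b _ _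
  simp only [ContinuousMap.zero_apply, mul_zero, sub_zero]
  exact Finset.sum_nonneg fun _ _ => abs_nonneg _

lemma norm_eq {K : Type*} [Fintype K] (x : Δ K) : ∑ k, |(x : K → ℝ) k| = 1 := by
  rw [← x.2.2]
  exact Finset.sum_congr rfl fun k _ => abs_of_nonneg (x.2.1 k)

lemma extend {K : Type*} [Fintype K] {I J : Type*} [Nonempty I] [Nonempty J]
    (p : I → Δ K) (q : J → Δ K) (f : I → ℝ) (g : J → ℝ)
    (h : ∀ i j a b, 0 ≤ a → 0 ≤ b → a * f i - b * g j ≤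
      ∑ k, |a * (p i : K → ℝ) k - b * (q j : K → ℝ) k|) :
    ∃ F ∈ D1 K, (∀ i, f i ≤ F (p i)) ∧ ∀ j, F (q j) ≤ g j := by
  obtain ⟨i0⟩ := (inferInstance : Nonempty I)
  have hg : ∀ j, -1 ≤ g j := by
    intro j
    have := h i0 j 0 1 le_rfl zero_le_one
    simp only [zero_mul, one_mul, zero_sub, abs_neg, norm_eq] at this
    linarith
  let T : Δ K → J × NNReal → ℝ := fun w c => c.2 * g c.1 +
    ∑ k, |(w : K → ℝ) k - c.2 * (q c.1 : K → ℝ) k|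
  have hT : ∀ w c, -1 ≤ T w c := by
    intro w c
    have h1 : ∑ k, |(c.2 : ℝ) * (q c.1 : K → ℝ) k| ≤ ∑ k, |(w : K → ℝ) k| +
        ∑ k, |(w : K → ℝ) k - c.2 * (q c.1 : K → ℝ) k| := by
      rw [← Finset.sum_add_distrib]
      refine Finset.sum_le_sum fun k _ => ?_
      have := abs_sub ((w : K → ℝ) k) ((w : K → ℝ) k - c.2 * (q c.1 : K → ℝ) k)
      simpa using this
    simp only [abs_mul, ← Finset.mul_sum, norm_eq, NNReal.abs_eq] at h1
    have h2 := mul_le_mul_of_nonneg_left (hg c.1) c.2.2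
    change -1 ≤ (c.2 : ℝ) * g c.1 + _
    have h3 : (c.2 : ℝ) * -1 ≤ c.2 * g c.1 := h2
    linarith
  have hB : ∀ w, BddBelow (range (T w)) := fun w => ⟨-1, by rintro _ ⟨c, rfl⟩; exact hT w c⟩
  let F : Δ K → ℝ := fun w => ⨅ c, T w c
  have hF1 : ∀ w, -1 ≤ F w := fun w => le_ciInf (hT w)
  have hD : ∀ x y : Δ K, ∀ a b : ℝ, 0 ≤ a → 0 ≤ b →
      a * F x - b * F y ≤ ∑ k, |a * (x : K → ℝ) k - b * (y : K → ℝ) k| := by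
    intro x y a b ha hb
    rcases ha.eq_or_lt with rfl | ha
    · simp only [zero_mul, zero_sub, abs_neg, abs_mul, ← Finset.mul_sum, norm_eq, abs_of_nonneg hb]
      nlinarith [hF1 y]
    · rw [sub_le_iff_le_add', ← sub_le_iff_le_add]
      change _ ≤ b * ⨅ c, T y c
      rw [Real.mul_iInf_of_nonneg hb]
      refine le_ciInf fun c => ?_
      have h1 : F x ≤ T x (c.1, ⟨b * c.2 / a, by positivity⟩) := ciInf_le (hB x) _
      have h2 := mul_le_mul_of_nonneg_left h1 ha.le
      have h3 : a * T x (c.1, ⟨b * c.2 / a, by positivity⟩) =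
          b * c.2 * g c.1 + ∑ k, |a * (x : K → ℝ) k - b * c.2 * (q c.1 : K → ℝ) k| := by
        change a * (b * c.2 / a * g c.1 +
          ∑ k, |(x : K → ℝ) k - b * c.2 / a * (q c.1 : K → ℝ) k|) = _
        simp only [mul_add, Finset.mul_sum]
        congr 1
        · field_simp
        · refine Finset.sum_congr rfl fun k _ => ?_
          nth_rewrite 1 [← abs_of_pos ha]
          rw [← abs_mul]
          congr 1
          field_simp
      have h4 : ∑ k, |a * (x : K → ℝ) k - b * c.2 * (q c.1 : K → ℝ) k| ≤
          ∑ k, |a * (x : K → ℝ) k - b * (y : K → ℝ) k| +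
          b * ∑ k, |(y : K → ℝ) k - c.2 * (q c.1 : K → ℝ) k| := by
        rw [Finset.mul_sum, ← Finset.sum_add_distrib]
        refine Finset.sum_le_sum fun k _ => ?_
        have hbm : ∀ t : ℝ, b * |t| = |b * t| := fun t => by rw [abs_mul, abs_of_nonneg hb]
        rw [hbm]
        refine le_trans (le_of_eq ?_) (abs_add_le _ _)
        congr 1; ring
      simp only [T] at *
      linarith
  have hc : Continuous F := by
    have : LipschitzWith (Fintype.card K : NNReal) F := by
      refine LipschitzWith.of_le_add_mul _ fun x y => ?_
      have h1 := hD x y 1 1 zero_le_one zero_le_one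
      simp only [one_mul] at h1
      have h2 : ∑ k, |(x : K → ℝ) k - (y : K → ℝ) k| ≤ Fintype.card K * dist x y := by
        have := Finset.sum_le_card_nsmul Finset.univ
          (fun k => |(x : K → ℝ) k - (y : K → ℝ) k|) (dist x y)
          (fun k _ => dist_le_pi_dist (x : K → ℝ) (y : K → ℝ) k)
        simpa using this
      simp only [NNReal.coe_natCast]
      linarith
    exact this.continuous
  refine ⟨⟨F, hc⟩, hD, fun i => ?_, fun j => ?_⟩
  · refine le_ciInf fun c => ?_
    have := h i c.1 1 c.2 zero_le_one c.2.2
    simp only [one_mul] at this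
    simp only [T]
    linarith
  · have := ciInf_le (hB (q j)) (j, 1)
    simpa [T] using this

/-- transport cost -/
noncomputable def cost {K : Type*} [Fintype K] {I J : Type*} [Fintype I] [Fintype J]
    (p : I → Δ K) (q : J → Δ K) (z : (I × J → ℝ) × (I × J → ℝ)) : ℝ :=
  ∑ c, ∑ k, |z.1 c * (p c.1 : K → ℝ) k - z.2 c * (q c.2 : K → ℝ) k|

/-- feasible plans -/
def Feas {I J : Type*} [Fintype I] [Fintype J] (u : I → ℝ) (v : J → ℝ) :
    Set ((I × J → ℝ) × (I × J → ℝ)) :=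
  {z | 0 ≤ z.1 ∧ 0 ≤ z.2 ∧ (∀ i, ∑ j, z.1 (i, j) = u i) ∧ ∀ j, ∑ i, z.2 (i, j) = v j}

lemma exists_min {K : Type*} [Fintype K] {I J : Type*} [Fintype I] [Fintype J]
    (p : I → Δ K) (q : J → Δ K) (u : I → ℝ) (v : J → ℝ) (hne : (Feas u v).Nonempty) :
    ∃ z ∈ Feas u v, ∀ z' ∈ Feas u v, cost p q z ≤ cost p q z' := by
  have hcl : IsClosed (Feas u v) := by
    have : Feas u v = {z | 0 ≤ z.1} ∩ {z | 0 ≤ z.2} ∩ (⋂ i, {z | ∑ j, z.1 (i, j) = u i}) ∩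
        (⋂ j, {z | ∑ i, z.2 (i, j) = v j}) := by
      ext z; simp [Feas, and_assoc]
    rw [this]
    refine ((IsClosed.inter ?_ ?_).inter ?_).inter ?_
    · exact isClosed_le (by fun_prop) (by fun_prop)
    · exact isClosed_le (by fun_prop) (by fun_prop)
    · exact isClosed_iInter fun i => isClosed_eq (by fun_prop) (by fun_prop)
    · exact isClosed_iInter fun i => isClosed_eq (by fun_prop) (by fun_prop)
  have hcomp : IsCompact (Feas u v) := by
    refine IsCompact.of_isClosed_subset
      ((isCompact_Icc (a := (0 : I × J → ℝ)) (b := fun c => u c.1)).prod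
        (isCompact_Icc (a := (0 : I × J → ℝ)) (b := fun c => v c.2))) hcl ?_
    rintro z ⟨h1, h2, h3, h4⟩
    refine ⟨⟨h1, fun c => ?_⟩, ⟨h2, fun c => ?_⟩⟩
    · change z.1 c ≤ u c.1
      rw [← h3 c.1]
      exact Finset.single_le_sum (f := fun j => z.1 (c.1, j)) (fun j _ => h1 _) (Finset.mem_univ c.2)
    · change z.2 c ≤ v c.2
      rw [← h4 c.2]
      exact Finset.single_le_sum (f := fun i => z.2 (i, c.2)) (fun j _ => h2 _) (Finset.mem_univ c.1)
  have hcont : Continuous (cost p q) := by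
    unfold cost
    fun_prop
  obtain ⟨z, hz, hm⟩ := hcomp.exists_isMinOn hne hcont.continuousOn
  exact ⟨z, hz, fun z' hz' => hm hz'⟩

lemma cost_nonneg {K : Type*} [Fintype K] {I J : Type*} [Fintype I] [Fintype J]
    (p : I → Δ K) (q : J → Δ K) (z : (I × J → ℝ) × (I × J → ℝ)) : 0 ≤ cost p q z :=
  Finset.sum_nonneg fun _ _ => Finset.sum_nonneg fun _ _ => abs_nonneg _

lemma cost_smul {K : Type*} [Fintype K] {I J : Type*} [Fintype I] [Fintype J]
    (p : I → Δ K) (q : J → Δ K) (z : (I × J → ℝ) × (I × J → ℝ)) (t : ℝ) (ht : 0 ≤ t) :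
    cost p q (t • z) = t * cost p q z := by
  unfold cost
  simp only [Finset.mul_sum]
  refine Finset.sum_congr rfl fun c _ => Finset.sum_congr rfl fun k _ => ?_
  have hbm : ∀ r : ℝ, t * |r| = |t * r| := fun r => by rw [abs_mul, abs_of_nonneg ht]
  rw [hbm]
  congr 1
  simp; ring

lemma cost_add {K : Type*} [Fintype K] {I J : Type*} [Fintype I] [Fintype J]
    (p : I → Δ K) (q : J → Δ K) (z z' : (I × J → ℝ) × (I × J → ℝ)) :
    cost p q (z + z') ≤ cost p q z + cost p q z' := by
  unfold cost
  simp only [← Finset.sum_add_distrib]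
  refine Finset.sum_le_sum fun c _ => Finset.sum_le_sum fun k _ => ?_
  refine le_trans (le_of_eq ?_) (abs_add_le _ _)
  congr 1
  simp; ring

lemma feas_smul {I J : Type*} [Fintype I] [Fintype J] {u : I → ℝ} {v : J → ℝ} {z} (t : ℝ)
    (ht : 0 ≤ t) (hz : z ∈ Feas u v) : t • z ∈ Feas (t • u) (t • v) := by
  obtain ⟨h1, h2, h3, h4⟩ := hz
  refine ⟨smul_nonneg ht h1, smul_nonneg ht h2, fun i => ?_, fun j => ?_⟩
  · simp [← Finset.mul_sum, h3]
  · simp [← Finset.mul_sum, h4]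

lemma feas_add {I J : Type*} [Fintype I] [Fintype J] {u u' : I → ℝ} {v v' : J → ℝ} {z z'}
    (hz : z ∈ Feas u v) (hz' : z' ∈ Feas u' v') : z + z' ∈ Feas (u + u') (v + v') := by
  obtain ⟨h1, h2, h3, h4⟩ := hz
  obtain ⟨h1', h2', h3', h4'⟩ := hz'
  refine ⟨add_nonneg h1 h1', add_nonneg h2 h2', fun i => ?_, fun j => ?_⟩
  · simp [Finset.sum_add_distrib, h3, h3']
  · simp [Finset.sum_add_distrib, h4, h4']

/-- the epigraph cone -/
noncomputable def cone {K : Type*} [Fintype K] {I J : Type*} [Fintype I] [Fintype J]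
    (p : I → Δ K) (q : J → Δ K) : PointedCone ℝ ((I → ℝ) × (J → ℝ) × ℝ) where
  carrier := {e | ∃ z ∈ Feas e.1 e.2.1, cost p q z ≤ e.2.2}
  zero_mem' := by
    refine ⟨0, ⟨le_rfl, le_rfl, by simp, by simp⟩, ?_⟩
    simp [cost]
  smul_mem' := by
    rintro ⟨t, ht⟩ e ⟨z, hz, hc⟩
    refine ⟨t • z, feas_smul t ht hz, ?_⟩
    rw [cost_smul _ _ _ _ ht]
    exact mul_le_mul_of_nonneg_left hc ht
  add_mem' := by
    rintro e e' ⟨z, hz, hc⟩ ⟨z', hz', hc'⟩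
    exact ⟨z + z', feas_add hz hz', (cost_add p q z z').trans (add_le_add hc hc')⟩

lemma mem_cone {K : Type*} [Fintype K] {I J : Type*} [Fintype I] [Fintype J]
    (p : I → Δ K) (q : J → Δ K) (e : (I → ℝ) × (J → ℝ) × ℝ) :
    e ∈ cone p q ↔ ∃ z ∈ Feas e.1 e.2.1, cost p q z ≤ e.2.2 := Iff.rfl

lemma feas_nonempty {I J : Type*} [Fintype I] [Fintype J] (u : I → ℝ) (v : J → ℝ)
    (hu : ∀ i, 0 ≤ u i) (hv : ∀ j, 0 ≤ v j) (u0 : I → ℝ) (v0 : J → ℝ)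
    (hu0 : ∀ i, 0 ≤ u0 i) (hv0 : ∀ j, 0 ≤ v0 j) (su : ∑ i, u0 i = 1) (sv : ∑ j, v0 j = 1) :
    (Feas u v).Nonempty := by
  refine ⟨(fun c => u c.1 * v0 c.2, fun c => u0 c.1 * v c.2),
    fun c => mul_nonneg (hu _) (hv0 _), fun c => mul_nonneg (hu0 _) (hv _), fun i => ?_, fun j => ?_⟩
  · simp [← Finset.mul_sum, sv]
  · simp [← Finset.sum_mul, su]

lemma exists_big {I : Type*} [Fintype I] (u : I → ℝ) (hu : ∀ i, 0 < u i) (c : I → ℝ) :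
    ∃ t0 : ℝ, ∀ t, t0 ≤ t → ∀ i, 0 ≤ t * u i + c i := by
  refine ⟨∑ i, |c i| / u i, fun t ht i => ?_⟩
  have h1 : |c i| / u i ≤ t := le_trans
    (Finset.single_le_sum (f := fun i => |c i| / u i)
      (fun i _ => div_nonneg (abs_nonneg _) (hu i).le) (Finset.mem_univ i)) ht
  rw [div_le_iff₀ (hu i)] at h1
  linarith [neg_abs_le (c i)]

lemma duality {K : Type*} [Fintype K] {I J : Type*} [Fintype I] [Fintype J]
    (p : I → Δ K) (q : J → Δ K) (u : I → ℝ) (v : J → ℝ) (hu : ∀ i, 0 < u i) (hv : ∀ j, 0 < v j)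
    (su : ∑ i, u i = 1) (sv : ∑ j, v j = 1) (m : ℝ) (hm : ∀ z ∈ Feas u v, m ≤ cost p q z) :
    ∃ (f : I → ℝ) (g : J → ℝ), (∀ i j a b, 0 ≤ a → 0 ≤ b → a * f i - b * g j ≤
      ∑ k, |a * (p i : K → ℝ) k - b * (q j : K → ℝ) k|) ∧
      ∑ i, u i * f i - ∑ j, v j * g j = m := by
  classical
  obtain ⟨i0⟩ : Nonempty I := by
    by_contra hI
    rw [not_nonempty_iff] at hI
    simp at su
  let L : ℝ × ℝ →ₗ[ℝ] ((I → ℝ) × (J → ℝ) × ℝ) :=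
    { toFun := fun t => (t.1 • u, t.1 • v, t.2)
      map_add' := fun a b => by ext <;> simp [add_mul]
      map_smul' := fun a b => by ext <;> simp [mul_assoc] }
  let φ : ((I → ℝ) × (J → ℝ) × ℝ) →ₗ[ℝ] ℝ :=
    { toFun := fun e => e.2.2 - m * (e.1 i0 / u i0)
      map_add' := fun a b => by simp; ring
      map_smul' := fun a b => by simp; ring }
  have hφL : ∀ t, φ (L t) = t.2 - m * t.1 := by
    intro t
    have := (hu i0).ne'
    simp only [φ, L, LinearMap.coe_mk, AddHom.coe_mk, Pi.smul_apply, smul_eq_mul]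
    field_simp
  let f0 : ((I → ℝ) × (J → ℝ) × ℝ) →ₗ.[ℝ] ℝ := ⟨LinearMap.range L, φ.comp (LinearMap.range L).subtype⟩
  obtain ⟨G, hG1, hG2⟩ := riesz_extension (cone p q) f0 (by
    rintro ⟨_, t, rfl⟩ hx
    change 0 ≤ φ (L t)
    rw [hφL]
    obtain ⟨z, hz, hc⟩ := hx
    change z ∈ Feas (t.1 • u) (t.1 • v) at hz
    change cost p q z ≤ t.2 at hc
    have ht : 0 ≤ t.1 := by
      have h1 := hz.2.2.1 i0
      have h2 : 0 ≤ ∑ j, z.1 (i0, j) := Finset.sum_nonneg fun j _ => hz.1 _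
      rw [h1] at h2
      exact nonneg_of_mul_nonneg_left h2 (hu i0)
    rcases ht.eq_or_lt with h0 | h0
    · rw [← h0]
      linarith [cost_nonneg p q z]
    · have h1 := feas_smul t.1⁻¹ (inv_nonneg.2 ht) hz
      rw [smul_smul, smul_smul, inv_mul_cancel₀ h0.ne', one_smul, one_smul] at h1
      have h2 := hm _ h1
      rw [cost_smul _ _ _ _ (inv_nonneg.2 ht), inv_mul_eq_div, le_div_iff₀ h0] at h2
      linarith) (by
    intro e
    obtain ⟨t1, h1⟩ := exists_big u hu e.1
    obtain ⟨t2, h2⟩ := exists_big v hv e.2.1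
    obtain ⟨z, hz⟩ := feas_nonempty (max t1 t2 • u + e.1) (max t1 t2 • v + e.2.1)
      (h1 _ (le_max_left _ _)) (h2 _ (le_max_right _ _)) u v (fun i => (hu i).le)
      (fun i => (hv i).le) su sv
    refine ⟨⟨L (max t1 t2, cost p q z - e.2.2), ⟨_, rfl⟩⟩, z, hz, ?_⟩
    simp [L])
  have hG3 : ∀ t, G (L t) = t.2 - m * t.1 := by
    intro t
    rw [← hφL]
    exact hG1 ⟨L t, ⟨_, rfl⟩⟩
  have hr : ∀ r : ℝ, G ((0 : I → ℝ), (0 : J → ℝ), r) = r := by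
    intro r
    have := hG3 (0, r)
    simpa [L] using this
  have hsplit : ∀ (c : I → ℝ) (d : J → ℝ) (r : ℝ), G (c, d, r) = G (c, 0, 0) + G (0, d, 0) + r := by
    intro c d r
    nth_rewrite 2 [← hr r]
    rw [← map_add, ← map_add]
    simp
  let A : (I → ℝ) →ₗ[ℝ] ℝ := G ∘ₗ LinearMap.inl ℝ _ _
  let B : (J → ℝ) →ₗ[ℝ] ℝ := G ∘ₗ LinearMap.inr ℝ _ _ ∘ₗ LinearMap.inl ℝ _ _
  have hA : ∀ c, G (c, 0, 0) = ∑ i, c i * A (Pi.single i 1) := by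
    intro c
    change A c = _
    rw [LinearMap.pi_apply_eq_sum_univ A c]
    refine Finset.sum_congr rfl fun i _ => ?_
    rw [smul_eq_mul]; congr 2; ext j; simp [Pi.single_apply, eq_comm]
  have hB : ∀ c, G (0, c, 0) = ∑ i, c i * B (Pi.single i 1) := by
    intro c
    change B c = _
    rw [LinearMap.pi_apply_eq_sum_univ B c]
    refine Finset.sum_congr rfl fun i _ => ?_
    rw [smul_eq_mul]; congr 2; ext j; simp [Pi.single_apply, eq_comm]
  refine ⟨fun i => - A (Pi.single i 1), fun j => B (Pi.single j 1), ?_, ?_⟩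
  · intro i j a b ha hb
    have h1 := hG2 (Pi.single i a, Pi.single j b,
      ∑ k, |a * (p i : K → ℝ) k - b * (q j : K → ℝ) k|) (by
      refine ⟨(Pi.single (i, j) a, Pi.single (i, j) b), ⟨?_, ?_, ?_, ?_⟩, ?_⟩
      · simpa using ha
      · simpa using hb
      · intro i'
        by_cases h : i' = i <;> simp [Pi.single_apply, h]
      · intro j'
        by_cases h : j' = j <;> simp [Pi.single_apply, h]
      · unfold cost
        rw [Finset.sum_eq_single (i, j)]
        · simp
        · intro c _ hc
          simp [Pi.single_apply, hc]
        · simp)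
    rw [hsplit, hA, hB] at h1
    simp [Pi.single_apply] at h1
    linarith
  · have h1 := hG3 (1, 0)
    have h2 : G (u, v, 0) = -m := by simpa [L] using h1
    rw [hsplit, hA, hB] at h2
    simp only [mul_neg, Finset.sum_neg_distrib]
    linarith

lemma attained {K : Type*} [Fintype K] {I J : Type*} [Fintype I] [Fintype J]
    (p : I → Δ K) (q : J → Δ K) (wu : I → ℝ) (wv : J → ℝ) (hu : ∀ i, 0 < wu i) (hv : ∀ j, 0 < wv j)
    (u v : ProbabilityMeasure (Δ K))
    (eu : (u : Measure (Δ K)) = ∑ i, ENNReal.ofReal (wu i) • Measure.dirac (p i))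
    (ev : (v : Measure (Δ K)) = ∑ i, ENNReal.ofReal (wv i) • Measure.dirac (q i)) :
    ∃ n : ℕ, 0 < n ∧ ∃ π π' : K × Fin n → ℝ,
          IsProbVec K (Fin n) π ∧ IsProbVec K (Fin n) π' ∧
          ∃ post post' : Fin n → Δ K,
            IsPosterior K (Fin n) π post ∧ IsPosterior K (Fin n) π' post' ∧
            (u : Measure (Δ K)) = ψ K (Fin n) π post ∧
            (v : Measure (Δ K)) = ψ K (Fin n) π' post' ∧
            dstar K u v = ∑ x : K × Fin n, |π x - π' x| := by
  have su := sum_w wu (fun i => (hu i).le) p u eu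
  have sv := sum_w wv (fun i => (hv i).le) q v ev
  have nI : Nonempty I := by
    by_contra hI
    rw [not_nonempty_iff] at hI
    simp at su
  have nJ : Nonempty J := by
    by_contra hI
    rw [not_nonempty_iff] at hI
    simp at sv
  obtain ⟨z, hz, hmin⟩ := exists_min p q wu wv
    (feas_nonempty _ _ (fun i => (hu i).le) (fun i => (hv i).le) _ _ (fun i => (hu i).le)
      (fun i => (hv i).le) su sv)
  obtain ⟨f, g, hfg, hval⟩ := duality p q wu wv hu hv su sv _ hmin
  obtain ⟨F, hF, hf, hg⟩ := extend p q f g hfg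
  obtain ⟨h1, h2, h3, h4⟩ := hz
  let e : Fin (Fintype.card (I × J)) ≃ I × J := (Fintype.equivFin (I × J)).symm
  let π : K × Fin (Fintype.card (I × J)) → ℝ := fun x => z.1 (e x.2) * (p (e x.2).1 : K → ℝ) x.1
  let π' : K × Fin (Fintype.card (I × J)) → ℝ := fun x => z.2 (e x.2) * (q (e x.2).2 : K → ℝ) x.1
  have m1 : ∀ s, marg K _ π s = z.1 (e s) := by
    intro s
    simp only [marg, π, ← Finset.mul_sum]
    rw [(p (e s).1).2.2, mul_one]
  have m2 : ∀ s, marg K _ π' s = z.2 (e s) := by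
    intro s
    simp only [marg, π', ← Finset.mul_sum]
    rw [(q (e s).2).2.2, mul_one]
  have P1 : IsProbVec K _ π := by
    refine ⟨fun x => mul_nonneg (h1 _) ((p _).2.1 _), ?_⟩
    rw [Fintype.sum_prod_type_right]
    change ∑ s, marg K _ π s = 1
    simp only [m1]
    rw [e.sum_comp (fun c => z.1 c), Fintype.sum_prod_type, ← su]
    exact Finset.sum_congr rfl fun i _ => h3 i
  have P2 : IsProbVec K _ π' := by
    refine ⟨fun x => mul_nonneg (h2 _) ((q _).2.1 _), ?_⟩
    rw [Fintype.sum_prod_type_right]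
    change ∑ s, marg K _ π' s = 1
    simp only [m2]
    rw [e.sum_comp (fun c => z.2 c), Fintype.sum_prod_type_right, ← sv]
    exact Finset.sum_congr rfl fun i _ => h4 i
  have Q1 : IsPosterior K _ π (fun s => p (e s).1) := by
    intro s _ k
    rw [m1, mul_comm]
  have Q2 : IsPosterior K _ π' (fun s => q (e s).2) := by
    intro s _ k
    rw [m2, mul_comm]
  have R1 : (u : Measure (Δ K)) = ψ K _ π (fun s => p (e s).1) := by
    unfold ψ
    simp only [m1]
    rw [e.sum_comp (fun c => ENNReal.ofReal (z.1 c) • Measure.dirac (p c.1)),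
      Fintype.sum_prod_type, eu]
    refine Finset.sum_congr rfl fun i _ => ?_
    dsimp only
    rw [← Finset.sum_smul, ← ENNReal.ofReal_sum_of_nonneg (fun j _ => h1 _), h3]
  have R2 : (v : Measure (Δ K)) = ψ K _ π' (fun s => q (e s).2) := by
    unfold ψ
    simp only [m2]
    rw [e.sum_comp (fun c => ENNReal.ofReal (z.2 c) • Measure.dirac (q c.2)),
      Fintype.sum_prod_type_right, ev]
    refine Finset.sum_congr rfl fun i _ => ?_
    dsimp only
    rw [← Finset.sum_smul, ← ENNReal.ofReal_sum_of_nonneg (fun j _ => h2 _), h4]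
  have hcost : ∑ x, |π x - π' x| = cost p q z := by
    rw [Fintype.sum_prod_type_right]
    unfold cost
    exact e.sum_comp
      (fun c => ∑ k, |z.1 c * (p c.1 : K → ℝ) k - z.2 c * (q c.2 : K → ℝ) k|)
  refine ⟨_, Fintype.card_pos, π, π', P1, P2, _, _, Q1, Q2, R1, R2, ?_⟩
  have up := part1 π π' P1 P2 _ _ Q1 Q2 u v R1 R2
  apply le_antisymm
  · refine csSup_le ⟨_, _, zero_mem, rfl⟩ ?_
    rintro _ ⟨f, hf, rfl⟩
    exact up f hf
  · refine le_csSup_of_le ⟨∑ x, |π x - π' x|, ?_⟩ ⟨F, hF, rfl⟩ ?_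
    · rintro _ ⟨f, hf, rfl⟩
      exact up f hf
    · simp only
      rw [hcost, pairing_eq wu (fun i => (hu i).le) p u eu,
        pairing_eq wv (fun i => (hv i).le) q v ev, ← hval]
      exact sub_le_sub (Finset.sum_le_sum fun i _ => mul_le_mul_of_nonneg_left (hf i) (hu i).le)
        (Finset.sum_le_sum fun i _ => mul_le_mul_of_nonneg_left (hg i) (hv i).le)

end Stmt12Aux

/-- **Proposition (Renault–Venel).** For each nonempty finite `S`, the posterior mapping
`ψ_S` is 1-Lipschitz from `(Δ(K×S), ‖·‖₁)` to `(Δ_f(X), d_*)`; moreover `d_*` is the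
largest distance with this property: for finitely supported `u, v`,
`d_*(u,v) = inf { ‖π − π'‖₁ : ψ_S(π) = u, ψ_S(π') = v }`, the infimum being attained. -/
theorem stmt12 (K : Type*) [Fintype K] [Nonempty K] :
    (∀ (S : Type) [Fintype S] [Nonempty S], ∀ π π' : K × S → ℝ,
      Stmt12.IsProbVec K S π → Stmt12.IsProbVec K S π' →
      ∀ post post' : S → Stmt12.Δ K,
      Stmt12.IsPosterior K S π post → Stmt12.IsPosterior K S π' post' →
      ∀ μ μ' : ProbabilityMeasure (Stmt12.Δ K),
      (μ : Measure (Stmt12.Δ K)) = Stmt12.ψ K S π post →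
      (μ' : Measure (Stmt12.Δ K)) = Stmt12.ψ K S π' post' →
      Stmt12.dstar K μ μ' ≤ ∑ x : K × S, |π x - π' x|) ∧
    (∀ u v : ProbabilityMeasure (Stmt12.Δ K),
      ∀ (U V : Finset (Stmt12.Δ K)) (wu wv : Stmt12.Δ K → ℝ),
      (∀ x ∈ U, 0 < wu x) → (∀ y ∈ V, 0 < wv y) →
      (u : Measure (Stmt12.Δ K)) = ∑ x ∈ U, ENNReal.ofReal (wu x) • Measure.dirac x →
      (v : Measure (Stmt12.Δ K)) = ∑ y ∈ V, ENNReal.ofReal (wv y) • Measure.dirac y →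
      IsLeast {r : ℝ | ∃ n : ℕ, 0 < n ∧ ∃ π π' : K × Fin n → ℝ,
          Stmt12.IsProbVec K (Fin n) π ∧ Stmt12.IsProbVec K (Fin n) π' ∧
          ∃ post post' : Fin n → Stmt12.Δ K,
            Stmt12.IsPosterior K (Fin n) π post ∧ Stmt12.IsPosterior K (Fin n) π' post' ∧
            (u : Measure (Stmt12.Δ K)) = Stmt12.ψ K (Fin n) π post ∧
            (v : Measure (Stmt12.Δ K)) = Stmt12.ψ K (Fin n) π' post' ∧
            r = ∑ x : K × Fin n, |π x - π' x|}
        (Stmt12.dstar K u v)) := by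
  have part : ∀ (S : Type) [Fintype S], ∀ π π' : K × S → ℝ,
      Stmt12.IsProbVec K S π → Stmt12.IsProbVec K S π' →
      ∀ post post' : S → Stmt12.Δ K,
      Stmt12.IsPosterior K S π post → Stmt12.IsPosterior K S π' post' →
      ∀ μ μ' : ProbabilityMeasure (Stmt12.Δ K),
      (μ : Measure (Stmt12.Δ K)) = Stmt12.ψ K S π post →
      (μ' : Measure (Stmt12.Δ K)) = Stmt12.ψ K S π' post' →
      Stmt12.dstar K μ μ' ≤ ∑ x : K × S, |π x - π' x| := by
    intro S _ π π' h h' post post' hp hp' μ μ' e e'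
    refine csSup_le ⟨_, _, Stmt12Aux.zero_mem, rfl⟩ ?_
    rintro _ ⟨f, hf, rfl⟩
    exact Stmt12Aux.part1 π π' h h' post post' hp hp' μ μ' e e' f hf
  refine ⟨fun S _ _ => part S, ?_⟩
  intro u v U V wu wv hU hV eu ev
  constructor
  · refine Stmt12Aux.attained (I := U) (J := V) (fun x => x) (fun y => y) (fun x => wu x)
      (fun y => wv y) (fun x => hU x x.2) (fun y => hV y y.2) u v ?_ ?_
    · rw [eu]
      exact (Finset.sum_coe_sort U (fun x => ENNReal.ofReal (wu x) • Measure.dirac x)).symm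
    · rw [ev]
      exact (Finset.sum_coe_sort V (fun x => ENNReal.ofReal (wv x) • Measure.dirac x)).symm
  · rintro r ⟨n, _, π, π', h, h', post, post', hp, hp', e, e', rfl⟩
    exact part _ π π' h h' post post' hp hp' u v e e'
end

section
/- For all u, u' ∈ Δ_f(X) and all α ∈ [0,1], the mixed extension satisfies F̂(α·u + (1−α)·u') = α·F̂(u) + (1−α)·F̂(u'), where the right-hand side is the Minkowski combination {α·v + (1−α)·v' : v ∈ F̂(u), v' ∈ F̂(u')}. -/
open Set

namespace Stmt13

/-- `Δ_f(X)`: finitely supported probability measures on `X`, seen as finitely supported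
nonnegative weight functions summing to 1. -/
def Δf (X : Type*) : Set (X →₀ ℝ) := {u | (∀ x, 0 ≤ u x) ∧ u.sum (fun _ r => r) = 1}

/-- The mixed extension `F̂(u) = { Σ_x u(x)·f(x) : f(x) ∈ conv F(x) for all x }` of a
correspondence `F : X ⇉ Δ_f(X)`. -/
def Fhat {X : Type*} (F : X → Set (X →₀ ℝ)) (u : X →₀ ℝ) : Set (X →₀ ℝ) :=
  {w | ∃ f : X → (X →₀ ℝ), (∀ x, f x ∈ convexHull ℝ (F x)) ∧
    w = u.sum (fun x r => r • f x)}

end Stmt13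

/-- **Lemma (Renault–Venel).** For all `u, u' ∈ Δ_f(X)` and `α ∈ [0,1]`,
`F̂(α·u + (1−α)·u') = α·F̂(u) + (1−α)·F̂(u')` (Minkowski combination). -/
theorem stmt13 (X : Type*) (F : X → Set (X →₀ ℝ))
    (hFne : ∀ x, (F x).Nonempty) (hFΔ : ∀ x, F x ⊆ Stmt13.Δf X)
    (u u' : X →₀ ℝ) (hu : u ∈ Stmt13.Δf X) (hu' : u' ∈ Stmt13.Δf X)
    (α : ℝ) (hα : α ∈ Icc (0:ℝ) 1) :
    Stmt13.Fhat F (α • u + (1 - α) • u') =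
      {w | ∃ v ∈ Stmt13.Fhat F u, ∃ v' ∈ Stmt13.Fhat F u',
        w = α • v + (1 - α) • v'} := by
  classical
  obtain ⟨h0, h1⟩ := hα
  have h1' : 0 ≤ 1 - α := by linarith
  have key : ∀ (v : X →₀ ℝ) (f : X → (X →₀ ℝ)), v.support ⊆ u.support ∪ u'.support →
      v.sum (fun x r => r • f x) = ∑ x ∈ u.support ∪ u'.support, v x • f x := by
    intro v f hv
    exact Finsupp.sum_of_support_subset v hv _ (fun x _ => zero_smul ℝ (f x))
  have hsu : u.support ⊆ u.support ∪ u'.support := Finset.subset_union_left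
  have hsu' : u'.support ⊆ u.support ∪ u'.support := Finset.subset_union_right
  have hsm : (α • u + (1 - α) • u').support ⊆ u.support ∪ u'.support :=
    Finsupp.support_add.trans
      (Finset.union_subset_union Finsupp.support_smul Finsupp.support_smul)
  ext w
  constructor
  · rintro ⟨f, hf, rfl⟩
    refine ⟨_, ⟨f, hf, rfl⟩, _, ⟨f, hf, rfl⟩, ?_⟩
    rw [key _ f hsm, key _ f hsu, key _ f hsu', Finset.smul_sum, Finset.smul_sum,
      ← Finset.sum_add_distrib]
    refine Finset.sum_congr rfl fun x _ => ?_
    simp only [Finsupp.add_apply, Finsupp.smul_apply, smul_eq_mul, add_smul, mul_smul]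
  · rintro ⟨_, ⟨f, hf, rfl⟩, _, ⟨f', hf', rfl⟩, rfl⟩
    have hg : ∀ x, ∃ g ∈ convexHull ℝ (F x),
        (α * u x + (1 - α) * u' x) • g = (α * u x) • f x + ((1 - α) * u' x) • f' x := by
      intro x
      have ha : 0 ≤ α * u x := mul_nonneg h0 (hu.1 x)
      have hb : 0 ≤ (1 - α) * u' x := mul_nonneg h1' (hu'.1 x)
      generalize α * u x = a at ha ⊢
      generalize (1 - α) * u' x = b at hb ⊢
      by_cases ht : a + b = 0
      · have : a = 0 := by linarith
        have : b = 0 := by linarith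
        subst a b
        exact ⟨f x, hf x, by simp⟩
      · refine ⟨(a / (a + b)) • f x + (b / (a + b)) • f' x,
          convex_convexHull ℝ (F x) (hf x) (hf' x) (by positivity) (by positivity)
            (by field_simp), ?_⟩
        rw [smul_add, smul_smul, smul_smul, mul_div_cancel₀ _ ht, mul_div_cancel₀ _ ht]
    choose g hgm hge using hg
    refine ⟨g, hgm, ?_⟩
    rw [key _ g hsm, key _ f hsu, key _ f' hsu', Finset.smul_sum, Finset.smul_sum,
      ← Finset.sum_add_distrib]
    refine Finset.sum_congr rfl fun x _ => ?_
    simp only [Finsupp.add_apply, Finsupp.smul_apply, smul_eq_mul, hge, mul_smul]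
end

section
/- Let F : X → P(Δ_f(X)) have nonempty values and be non-expansive for the Kantorovich-Rubinstein distance, i.e. for all x, x' ∈ X and all u ∈ F(x) there exists u' ∈ F(x') with d_KR(u,u') ≤ d(x,x'). Then the mixed extension F̂ is 1-Lipschitz from (Δ_f(X), d_KR) to itself: for all u₁, u₂ ∈ Δ_f(X) and every v₁ ∈ F̂(u₁), there exists v₂ ∈ F̂(u₂) with d_KR(v₁,v₂) ≤ d_KR(u₁,u₂). -/
open Set

namespace Stmt14

/-- `Δ_f(X)`: finitely supported probability measures on `X`, seen as finitely supported
nonnegative weight functions summing to 1. -/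
def Δf (X : Type*) : Set (X →₀ ℝ) := {u | (∀ x, 0 ≤ u x) ∧ u.sum (fun _ r => r) = 1}

/-- The mixed extension `F̂(u) = { Σ_x u(x)·f(x) : f(x) ∈ conv F(x) for all x }` of a
correspondence `F : X ⇉ Δ_f(X)`. -/
def Fhat {X : Type*} (F : X → Set (X →₀ ℝ)) (u : X →₀ ℝ) : Set (X →₀ ℝ) :=
  {w | ∃ f : X → (X →₀ ℝ), (∀ x, f x ∈ convexHull ℝ (F x)) ∧
    w = u.sum (fun x r => r • f x)}

/-- The Kantorovich–Rubinstein distance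
`d_KR(u,v) = sup { u(f) − v(f) : f 1-Lipschitz }` on `Δ_f(X)`. -/
noncomputable def dKR {X : Type*} [MetricSpace X] (u v : X →₀ ℝ) : ℝ :=
  sSup {r : ℝ | ∃ f : X → ℝ, LipschitzWith 1 f ∧
    r = u.sum (fun x a => a * f x) - v.sum (fun x a => a * f x)}

end Stmt14

namespace Stmt14

lemma kant {Z : Type*} [Fintype Z] (p q : Z → ℝ)
    (hp0 : ∀ z, 0 ≤ p z) (hp1 : ∑ z, p z = 1) (hq0 : ∀ z, 0 ≤ q z) (hq1 : ∑ z, q z = 1)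
    (c : Z → Z → ℝ) (C : ℝ)
    (h : ∀ φ ψ : Z → ℝ, (∀ x y, φ x + ψ y ≤ c x y) → ∑ z, p z * φ z + ∑ z, q z * ψ z ≤ C) :
    ∃ w : Z → Z → ℝ, (∀ x y, 0 ≤ w x y) ∧ (∀ x, ∑ y, w x y = p x) ∧ (∀ y, ∑ x, w x y = q y) ∧
      ∑ x, ∑ y, w x y * c x y ≤ C := by
  classical
  let vtx : Z × Z → (Z → ℝ) × (Z → ℝ) × ℝ :=
    fun z => (Pi.single z.1 1, Pi.single z.2 1, c z.1 z.2)
  let L : (Z × Z → ℝ) →ₗ[ℝ] (Z → ℝ) × (Z → ℝ) × ℝ := Fintype.linearCombination ℝ vtx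
  have hL : ∀ w, L w = ∑ z, w z • vtx z := fun w => Fintype.linearCombination_apply ℝ vtx w
  have hLc : Continuous L := L.continuous_of_finiteDimensional
  let A := L '' stdSimplex ℝ (Z × Z)
  let B : Set ((Z → ℝ) × (Z → ℝ) × ℝ) := {p} ×ˢ ({q} ×ˢ Iic C)
  by_cases hAB : Disjoint A B
  · exfalso
    obtain ⟨f, u, v, hfA, huv, hfB⟩ := geometric_hahn_banach_compact_closed
      ((convex_stdSimplex ℝ (Z × Z)).linear_image L) ((isCompact_stdSimplex ℝ (Z × Z)).image hLc)
      ((convex_singleton p).prod ((convex_singleton q).prod (convex_Iic C)))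
      (isClosed_singleton.prod (isClosed_singleton.prod isClosed_Iic)) hAB
    let φ : Z → ℝ := fun x => f (Pi.single x 1, 0, 0)
    let ψ : Z → ℝ := fun x => f (0, Pi.single x 1, 0)
    let s : ℝ := f (0, 0, 1)
    have hf : ∀ (a b : Z → ℝ) (t : ℝ), f (a, b, t) = ∑ z, a z * φ z + ∑ z, b z * ψ z + t * s := by
      intro a b t
      have e : (a, b, t) = ∑ z, a z • ((Pi.single z 1, 0, 0) : (Z → ℝ) × (Z → ℝ) × ℝ)
          + ∑ z, b z • ((0, Pi.single z 1, 0) : (Z → ℝ) × (Z → ℝ) × ℝ) + t • (0, 0, 1) := by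
        refine Prod.ext ?_ (Prod.ext ?_ ?_)
        · ext i; simp [Prod.fst_sum, Finset.sum_apply, Pi.single_apply]
        · ext i; simp [Prod.fst_sum, Prod.snd_sum, Finset.sum_apply, Pi.single_apply]
        · simp [Prod.snd_sum]
      rw [e]
      simp only [map_add, map_sum, map_smul, smul_eq_mul, φ, ψ, s]
    have h1 : ∀ x y, φ x + ψ y + c x y * s < u := by
      intro x y
      have := hfA _ ⟨Pi.single (x, y) 1, single_mem_stdSimplex ℝ (x, y), rfl⟩
      rw [hL] at this
      simpa [Pi.single_apply, ite_smul, vtx, hf] using this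
    have h2 : ∀ t ≤ C, v < ∑ z, p z * φ z + ∑ z, q z * ψ z + t * s := by
      intro t ht
      rw [← hf]
      exact hfB _ ⟨rfl, rfl, ht⟩
    set Φ := ∑ z, p z * φ z with hΦ
    set Ψ := ∑ z, q z * ψ z with hΨ
    rcases lt_trichotomy s 0 with hs | hs | hs
    · have h3 := h (fun x => (φ x - u) / (-s)) (fun y => ψ y / (-s)) (by
        intro x y
        rw [← add_div, div_le_iff₀ (by linarith)]
        linarith [h1 x y])
      have e1 : ∑ z, p z * ((φ z - u) / (-s)) = (Φ - u) / (-s) := by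
        have : ∀ z, p z * ((φ z - u) / (-s)) = (p z * φ z - p z * u) / (-s) := fun z => by ring
        simp only [this]
        rw [← Finset.sum_div, Finset.sum_sub_distrib, ← Finset.sum_mul, hp1, one_mul]
      have e2 : ∑ z, q z * (ψ z / (-s)) = Ψ / (-s) := by
        simp only [← mul_div_assoc]
        rw [← Finset.sum_div]
      simp only [e1, e2] at h3
      rw [← add_div, div_le_iff₀ (by linarith)] at h3
      linarith [h2 C le_rfl]
    · have h3 := h2 C le_rfl
      have e : Φ + Ψ = ∑ x, p x * ∑ y, q y * (φ x + ψ y) := by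
        have : ∀ x, ∑ y, q y * (φ x + ψ y) = φ x + Ψ := by
          intro x
          simp only [mul_add, Finset.sum_add_distrib, ← Finset.sum_mul, hq1, one_mul, hΨ]
        simp only [this]
        simp only [mul_add, Finset.sum_add_distrib, ← Finset.sum_mul, hp1, one_mul, hΦ]
      have : ∑ x, p x * ∑ y, q y * (φ x + ψ y) ≤ ∑ x, p x * ∑ y, q y * u := by
        gcongr with x _ y _
        · exact hp0 x
        · exact hq0 y
        · have := h1 x y
          rw [hs] at this
          linarith
      simp only [← Finset.sum_mul, hp1, hq1, one_mul] at this
      rw [hs] at h3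
      linarith
    · have h3 := h2 (min C ((v - Φ - Ψ) / s)) (min_le_left _ _)
      have h4 : min C ((v - Φ - Ψ) / s) * s ≤ (v - Φ - Ψ) / s * s :=
        mul_le_mul_of_nonneg_right (min_le_right _ _) hs.le
      rw [div_mul_cancel₀ _ hs.ne'] at h4
      linarith
  · rw [Set.not_disjoint_iff] at hAB
    obtain ⟨_, ⟨w, hw, rfl⟩, hb⟩ := hAB
    rw [hL] at hb
    obtain ⟨hb1, hb2, hb3⟩ := hb
    simp only [mem_singleton_iff, mem_Iic, Prod.snd_sum, Prod.fst_sum, vtx, Prod.smul_fst, Prod.smul_snd,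
      Fintype.sum_prod_type, smul_eq_mul] at hb1 hb2 hb3
    refine ⟨fun x y => w (x, y), fun x y => hw.1 _, fun x => ?_, fun y => ?_, hb3⟩
    · rw [← hb1]; simp [Finset.sum_apply, Pi.single_apply]
    · rw [← hb2]; simp [Finset.sum_apply, Pi.single_apply]

/-- Integration of a function against a finitely supported measure. -/
noncomputable def Ev {X : Type*} (f : X → ℝ) : (X →₀ ℝ) →ₗ[ℝ] ℝ := Finsupp.linearCombination ℝ f

lemma Ev_def {X : Type*} (f : X → ℝ) (u : X →₀ ℝ) : Ev f u = u.sum (fun x a => a * f x) := rfl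

lemma Ev_abs {X : Type*} [MetricSpace X] [CompactSpace X] {u : X →₀ ℝ} (hu : u ∈ Δf X)
    (f : X → ℝ) (hf : LipschitzWith 1 f) (x0 : X) :
    |Ev f u - f x0| ≤ Metric.diam (univ : Set X) := by
  have h1 : ∑ x ∈ u.support, u x = 1 := hu.2
  have e : Ev f u - f x0 = ∑ x ∈ u.support, u x * (f x - f x0) := by
    simp only [mul_sub, Finset.sum_sub_distrib, ← Finset.sum_mul, h1, one_mul]
    rfl
  rw [e]
  refine (Finset.abs_sum_le_sum_abs _ _).trans ?_
  calc _ ≤ ∑ x ∈ u.support, u x * Metric.diam (univ : Set X) := by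
        refine Finset.sum_le_sum fun x _ => ?_
        rw [abs_mul, abs_of_nonneg (hu.1 x)]
        refine mul_le_mul_of_nonneg_left ?_ (hu.1 x)
        have := hf.dist_le_mul x x0
        rw [Real.dist_eq] at this
        have h2 := Metric.dist_le_diam_of_mem (isCompact_univ (X := X)).isBounded (mem_univ x) (mem_univ x0)
        simp at this
        linarith
    _ = _ := by rw [← Finset.sum_mul, h1, one_mul]

lemma le_dKR {X : Type*} [MetricSpace X] [CompactSpace X] {u v : X →₀ ℝ} (hu : u ∈ Δf X)
    (hv : v ∈ Δf X) (f : X → ℝ) (hf : LipschitzWith 1 f) : Ev f u - Ev f v ≤ dKR u v := by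
  obtain ⟨x0⟩ : Nonempty X := by
    by_contra hne
    rw [not_nonempty_iff] at hne
    have := hu.2
    rw [Subsingleton.elim u 0] at this
    simp at this
  refine le_csSup ⟨2 * Metric.diam (univ : Set X), ?_⟩ ⟨f, hf, rfl⟩
  rintro r ⟨g, hg, rfl⟩
  rw [← Ev_def, ← Ev_def]
  have h1 := abs_le.1 (Ev_abs hu g hg x0)
  have h2 := abs_le.1 (Ev_abs hv g hg x0)
  linarith [h1.2, h2.1]

lemma dKR_le {X : Type*} [MetricSpace X] {u v : X →₀ ℝ} {B : ℝ}
    (h : ∀ f : X → ℝ, LipschitzWith 1 f → Ev f u - Ev f v ≤ B) : dKR u v ≤ B := by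
  refine csSup_le ⟨_, fun _ => 0, LipschitzWith.const' 0, rfl⟩ ?_
  rintro r ⟨g, hg, rfl⟩
  exact h g hg

lemma hull {X : Type*} [MetricSpace X] [CompactSpace X]
    (F : X → Set (X →₀ ℝ)) (hFΔ : ∀ x, F x ⊆ Δf X)
    (hexp : ∀ x x' : X, ∀ u ∈ F x, ∃ u' ∈ F x', dKR u u' ≤ dist x x') (x y : X)
    (a : X →₀ ℝ) (ha : a ∈ convexHull ℝ (F x)) :
    ∃ b ∈ convexHull ℝ (F y), ∀ f : X → ℝ, LipschitzWith 1 f → Ev f a - Ev f b ≤ dist x y := by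
  have hsub : convexHull ℝ (F x) ⊆ {a | ∃ b ∈ convexHull ℝ (F y), ∀ f : X → ℝ,
      LipschitzWith 1 f → Ev f a - Ev f b ≤ dist x y} := by
    refine convexHull_min ?_ ?_
    · intro a ha
      obtain ⟨b, hb, hab⟩ := hexp x y a ha
      exact ⟨b, subset_convexHull ℝ _ hb, fun f hf =>
        (le_dKR (hFΔ x ha) (hFΔ y hb) f hf).trans hab⟩
    · rintro a ⟨b, hb, hab⟩ a' ⟨b', hb', hab'⟩ s t hs ht hst
      refine ⟨s • b + t • b', convex_convexHull ℝ _ hb hb' hs ht hst, fun f hf => ?_⟩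
      have h1 := mul_le_mul_of_nonneg_left (hab f hf) hs
      have h2 := mul_le_mul_of_nonneg_left (hab' f hf) ht
      simp only [map_add, map_smul, smul_eq_mul]
      have : dist x y = s * dist x y + t * dist x y := by rw [← add_mul, hst, one_mul]
      linarith
  exact hsub ha

lemma sum_ext {X M : Type*} [AddCommMonoid M] [Module ℝ M] (u : X →₀ ℝ) (Z : Finset X)
    (hZ : u.support ⊆ Z) (f : X → M) :
    u.sum (fun x r => r • f x) = ∑ z : Z, u z • f z := by
  rw [Finsupp.sum_of_support_subset u hZ _ (by simp)]
  exact (Finset.sum_coe_sort Z (fun z => u z • f z)).symm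

end Stmt14

/-- **Lemma 8 (Renault–Venel).** Let `(X,d)` be a compact metric space and
`F : X ⇉ Δ_f(X)` be nonempty-valued and non-expansive for `d_KR`. Then the mixed
extension `F̂` is 1-Lipschitz from `(Δ_f(X), d_KR)` to itself. -/
theorem stmt14 (X : Type*) [MetricSpace X] [CompactSpace X]
    (F : X → Set (X →₀ ℝ)) (hFne : ∀ x, (F x).Nonempty)
    (hFΔ : ∀ x, F x ⊆ Stmt14.Δf X)
    (hexp : ∀ x x' : X, ∀ u ∈ F x, ∃ u' ∈ F x', Stmt14.dKR u u' ≤ dist x x')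
    (u₁ u₂ : X →₀ ℝ) (hu₁ : u₁ ∈ Stmt14.Δf X) (hu₂ : u₂ ∈ Stmt14.Δf X)
    (v₁ : X →₀ ℝ) (hv₁ : v₁ ∈ Stmt14.Fhat F u₁) :
    ∃ v₂ ∈ Stmt14.Fhat F u₂, Stmt14.dKR v₁ v₂ ≤ Stmt14.dKR u₁ u₂ := by
  classical
  obtain ⟨f₁, hf₁, rfl⟩ := hv₁
  obtain ⟨Z, hZ⟩ : ∃ Z : Finset X, Z = u₁.support ∪ u₂.support := ⟨_, rfl⟩
  have hZ1 : u₁.support ⊆ Z := hZ ▸ Finset.subset_union_left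
  have hZ2 : u₂.support ⊆ Z := hZ ▸ Finset.subset_union_right
  have s1 : ∑ z : Z, u₁ z = 1 := by
    have := Stmt14.sum_ext u₁ Z hZ1 (fun _ => (1 : ℝ))
    simp only [smul_eq_mul, mul_one] at this
    rw [← this]; exact hu₁.2
  have s2 : ∑ z : Z, u₂ z = 1 := by
    have := Stmt14.sum_ext u₂ Z hZ2 (fun _ => (1 : ℝ))
    simp only [smul_eq_mul, mul_one] at this
    rw [← this]; exact hu₂.2
  have hne : (Finset.univ : Finset Z).Nonempty := by
    by_contra hn
    rw [Finset.not_nonempty_iff_eq_empty] at hn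
    rw [hn] at s1
    simp at s1
  obtain ⟨w, hw0, hw1, hw2, hwC⟩ := Stmt14.kant (fun z : Z => u₁ z) (fun z : Z => u₂ z)
    (fun z => hu₁.1 z) s1 (fun z => hu₂.1 z) s2 (fun x y => dist (x : X) y) (Stmt14.dKR u₁ u₂) (by
      intro φ ψ hφ
      let g : X → ℝ := fun x => Finset.univ.inf' hne (fun y : Z => dist x y - ψ y)
      have hg : LipschitzWith 1 g := by
        refine LipschitzWith.of_le_add fun x y => ?_
        obtain ⟨z, -, hz⟩ := Finset.exists_mem_eq_inf' hne (fun z : Z => dist y z - ψ z)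
        have h1 : g x ≤ dist x z - ψ z := Finset.inf'_le _ (Finset.mem_univ z)
        have h2 : g y = dist y z - ψ z := hz
        linarith [dist_triangle x y z]
      refine le_trans ?_ (Stmt14.le_dKR hu₁ hu₂ g hg)
      have e1 := Stmt14.sum_ext u₁ Z hZ1 g
      have e2 := Stmt14.sum_ext u₂ Z hZ2 g
      simp only [smul_eq_mul] at e1 e2
      rw [Stmt14.Ev_def, Stmt14.Ev_def, e1, e2, sub_eq_add_neg, ← Finset.sum_neg_distrib]
      refine add_le_add (Finset.sum_le_sum fun z _ => ?_) (Finset.sum_le_sum fun z _ => ?_)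
      · refine mul_le_mul_of_nonneg_left ?_ (hu₁.1 z)
        exact Finset.le_inf' _ _ fun y _ => by linarith [hφ z y]
      · rw [← mul_neg]
        refine mul_le_mul_of_nonneg_left ?_ (hu₂.1 z)
        have h1 : g z ≤ dist (z : X) z - ψ z := Finset.inf'_le _ (Finset.mem_univ z)
        rw [dist_self] at h1
        linarith)
  choose g hgF hg using fun x y => Stmt14.hull F hFΔ hexp x y (f₁ x) (hf₁ x)
  let f₂ : X → (X →₀ ℝ) := fun y =>
    if h : y ∈ Z ∧ u₂ y ≠ 0 then ∑ x : Z, (w x ⟨y, h.1⟩ / u₂ y) • g x y else (hFne y).some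
  refine ⟨_, ⟨f₂, ?_, rfl⟩, ?_⟩
  · intro y
    by_cases h : y ∈ Z ∧ u₂ y ≠ 0
    · simp only [f₂, dif_pos h]
      refine (convex_convexHull ℝ (F y)).sum_mem (fun x _ => div_nonneg (hw0 _ _) (hu₂.1 y)) ?_
        (fun x _ => hgF x y)
      rw [← Finset.sum_div, hw2, div_self h.2]
    · simp only [f₂, dif_neg h]
      exact subset_convexHull ℝ _ (hFne y).some_mem
  · have e1 : u₁.sum (fun x r => r • f₁ x) = ∑ x : Z, ∑ y : Z, w x y • f₁ x := by
      rw [Stmt14.sum_ext u₁ Z hZ1 f₁]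
      refine Finset.sum_congr rfl fun x _ => ?_
      rw [← Finset.sum_smul, hw1]
    have e2 : u₂.sum (fun x r => r • f₂ x) = ∑ x : Z, ∑ y : Z, w x y • g x y := by
      rw [Stmt14.sum_ext u₂ Z hZ2 f₂, Finset.sum_comm]
      refine Finset.sum_congr rfl fun y _ => ?_
      by_cases h : u₂ y = 0
      · rw [h, zero_smul]
        refine (Finset.sum_eq_zero fun x _ => ?_).symm
        have h3 := (Finset.sum_eq_zero_iff_of_nonneg (fun x _ => hw0 x y)).1 ((hw2 y).trans h) x
          (Finset.mem_univ x)
        rw [h3, zero_smul]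
      · have h' : (y : X) ∈ Z ∧ u₂ y ≠ 0 := ⟨y.2, h⟩
        simp only [f₂, dif_pos h', Finset.smul_sum, smul_smul]
        refine Finset.sum_congr rfl fun x _ => ?_
        rw [mul_div_cancel₀ _ h]
    rw [e1, e2]
    refine Stmt14.dKR_le fun f hf => le_trans ?_ hwC
    simp only [map_sum, map_smul, smul_eq_mul, ← Finset.sum_sub_distrib, ← mul_sub]
    exact Finset.sum_le_sum fun x _ => Finset.sum_le_sum fun y _ =>
      mul_le_mul_of_nonneg_left (hg x y f hf) (hw0 x y)
end

section
/- Let Γ = (X, F, r) be a Gambling House such that (X,d) is a compact metric space, r is continuous, and F is non-expansive for the Kantorovich-Rubinstein distance: for all x, x' ∈ X and u ∈ F(x) there exists u' ∈ F(x') with d_KR(u,u') ≤ d(x,x'). Then Γ has a general uniform value v*, and for every x ∈ X, v*(x) is the infimum of w(x) over all continuous affine functions w : Δ(X) → [0,1] such that (1) w(δ_y) ≥ sup_{u ∈ F(y)} w(u) for all y ∈ X, and (2) w(u) ≥ r(u) for all u ∈ R, where R is the set of invariant measures of Γ. -/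
open Set MeasureTheory

namespace Stmt15

variable {X : Type*} [MetricSpace X] [CompactSpace X] [MeasurableSpace X] [BorelSpace X]

/-- `Δ_f(X)`: finitely supported probability measures on `X`, seen as finitely supported
nonnegative weight functions summing to 1. -/
def Δf (X : Type*) : Set (X →₀ ℝ) := {u | (∀ x, 0 ≤ u x) ∧ u.sum (fun _ r => r) = 1}

/-- The mixed extension `F̂(u) = { Σ_x u(x)·f(x) : f(x) ∈ conv F(x) for all x }` of a
correspondence `F : X ⇉ Δ_f(X)`. -/
def Fhat {X : Type*} (F : X → Set (X →₀ ℝ)) (u : X →₀ ℝ) : Set (X →₀ ℝ) :=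
  {w | ∃ f : X → (X →₀ ℝ), (∀ x, f x ∈ convexHull ℝ (F x)) ∧
    w = u.sum (fun x r => r • f x)}

/-- The Kantorovich–Rubinstein distance on `Δ_f(X)`. -/
noncomputable def dKR {X : Type*} [MetricSpace X] (u v : X →₀ ℝ) : ℝ :=
  sSup {r : ℝ | ∃ f : X → ℝ, LipschitzWith 1 f ∧
    r = u.sum (fun x a => a * f x) - v.sum (fun x a => a * f x)}

/-- An evaluation: a probability distribution `θ = (θ_t)_{t ≥ 1}` over stages
(indexed here by `t : ℕ`, `t` standing for stage `t+1`). -/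
def IsEval (θ : ℕ → ℝ) : Prop := (∀ t, 0 ≤ θ t) ∧ ∑' t, θ t = 1

/-- The impatience `I(θ) = Σ_{t≥1} |θ_{t+1} − θ_t|`. -/
noncomputable def impatience (θ : ℕ → ℝ) : ℝ := ∑' t, |θ (t + 1) - θ t|

/-- The linear extension of the payoff `r` to `Δ_f(X)`. -/
noncomputable def rExt (r : X → ℝ) (u : X →₀ ℝ) : ℝ := u.sum fun x a => a * r x

/-- Mixed plays at `x₀`: `u₁ ∈ conv F(x₀)` and `u_{t+1} ∈ F̂(u_t)`. -/
def IsPlay {X : Type*} (F : X → Set (X →₀ ℝ)) (x₀ : X) (σ : ℕ → (X →₀ ℝ)) : Prop :=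
  σ 0 ∈ convexHull ℝ (F x₀) ∧ ∀ t, σ (t + 1) ∈ Fhat F (σ t)

/-- The `θ`-payoff `γ_θ(σ) = Σ_t θ_t r(u_t)` of a play. -/
noncomputable def payoff (r : X → ℝ) (θ : ℕ → ℝ) (σ : ℕ → (X →₀ ℝ)) : ℝ :=
  ∑' t, θ t * rExt r (σ t)

/-- The `θ`-value `v_θ(x) = sup_{σ ∈ Σ(x)} γ_θ(σ)`. -/
noncomputable def value (F : X → Set (X →₀ ℝ)) (r : X → ℝ) (θ : ℕ → ℝ) (x : X) : ℝ :=
  sSup {c : ℝ | ∃ σ, IsPlay F x σ ∧ c = payoff r θ σ}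

/-- The Borel measure on `X` associated to a finitely supported weight function. -/
noncomputable def toMeas (u : X →₀ ℝ) : Measure X :=
  u.sum fun x a => ENNReal.ofReal a • Measure.dirac x

/-- `w` is affine on `Δ(X)`. -/
def IsAffine (w : ProbabilityMeasure X → ℝ) : Prop :=
  ∀ (u v m : ProbabilityMeasure X) (α : ℝ), α ∈ Icc (0:ℝ) 1 →
    (m : Measure X) =
      ENNReal.ofReal α • (u : Measure X) + ENNReal.ofReal (1 - α) • (v : Measure X) →
    w m = α * w u + (1 - α) * w v

/-- The set `R` of invariant measures: `u ∈ Δ(X)` with `(u,u) ∈ cl(Graph F̂)` for the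
weak-* topology. -/
def invariantSet (F : X → Set (X →₀ ℝ)) : Set (ProbabilityMeasure X) :=
  {μ | (μ, μ) ∈ closure {p : ProbabilityMeasure X × ProbabilityMeasure X |
    ∃ u v : X →₀ ℝ, u ∈ Δf X ∧ v ∈ Fhat F u ∧
      (p.1 : Measure X) = toMeas u ∧ (p.2 : Measure X) = toMeas v}}

end Stmt15

namespace Stmt15
set_option linter.unusedSectionVars false

/-- pairing of a finitely supported weight with a function -/
noncomputable def E {X : Type*} (u : X →₀ ℝ) (f : X → ℝ) : ℝ := u.sum fun x a => a * f x

section basicE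
variable {X : Type*}

lemma E_eq_lc (u : X →₀ ℝ) (f : X → ℝ) : E u f = Finsupp.linearCombination ℝ f u := by
  simp [E, Finsupp.linearCombination_apply]

lemma E_add (u v : X →₀ ℝ) (f : X → ℝ) : E (u + v) f = E u f + E v f := by
  simp [E_eq_lc]

lemma E_smul (a : ℝ) (u : X →₀ ℝ) (f : X → ℝ) : E (a • u) f = a * E u f := by
  simp [E_eq_lc]

lemma E_zero (f : X → ℝ) : E 0 f = 0 := by simp [E]

lemma E_single (x : X) (a : ℝ) (f : X → ℝ) : E (Finsupp.single x a) f = a * f x := by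
  simp [E]

lemma E_sum {ι : Type*} (s : Finset ι) (u : ι → X →₀ ℝ) (f : X → ℝ) :
    E (∑ i ∈ s, u i) f = ∑ i ∈ s, E (u i) f := by
  simp [E_eq_lc]

lemma E_fadd (u : X →₀ ℝ) (f g : X → ℝ) : E u (fun x => f x + g x) = E u f + E u g := by
  simp [E, Finsupp.sum, mul_add, Finset.sum_add_distrib]

lemma E_fsub (u : X →₀ ℝ) (f g : X → ℝ) : E u (fun x => f x - g x) = E u f - E u g := by
  simp [E, Finsupp.sum, mul_sub, Finset.sum_sub_distrib]

lemma E_fmul (u : X →₀ ℝ) (c : ℝ) (f : X → ℝ) : E u (fun x => c * f x) = c * E u f := by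
  simp only [E, Finsupp.sum, Finset.mul_sum]
  exact Finset.sum_congr rfl fun x _ => by ring

lemma E_fsum {ι : Type*} (s : Finset ι) (u : X →₀ ℝ) (f : ι → X → ℝ) :
    E u (fun x => ∑ i ∈ s, f i x) = ∑ i ∈ s, E u (f i) := by
  simp only [E, Finsupp.sum, Finset.mul_sum]
  exact Finset.sum_comm

lemma E_mono {u : X →₀ ℝ} (hu : ∀ x, 0 ≤ u x) {f g : X → ℝ} (h : ∀ x, f x ≤ g x) :
    E u f ≤ E u g := by
  unfold E Finsupp.sum
  exact Finset.sum_le_sum fun x _ => mul_le_mul_of_nonneg_left (h x) (hu x)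

lemma E_one {u : X →₀ ℝ} (hu : u ∈ Δf X) : E u (fun _ => 1) = 1 := by
  have := hu.2
  simpa [E] using this

lemma E_const {u : X →₀ ℝ} (hu : u ∈ Δf X) (c : ℝ) : E u (fun _ => c) = c := by
  have := E_fmul u c (fun _ => 1)
  rw [E_one hu] at this
  simpa using this

lemma E_le {u : X →₀ ℝ} (hu : u ∈ Δf X) {f : X → ℝ} {c : ℝ} (h : ∀ x, f x ≤ c) : E u f ≤ c := by
  rw [← E_const hu c]; exact E_mono hu.1 h

lemma le_E {u : X →₀ ℝ} (hu : u ∈ Δf X) {f : X → ℝ} {c : ℝ} (h : ∀ x, c ≤ f x) : c ≤ E u f := by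
  rw [← E_const hu c]; exact E_mono hu.1 h

lemma E_abs_le {u : X →₀ ℝ} (hu : u ∈ Δf X) {f : X → ℝ} {c : ℝ} (h : ∀ x, |f x| ≤ c) :
    |E u f| ≤ c :=
  abs_le.2 ⟨le_E hu fun x => (abs_le.1 (h x)).1, E_le hu fun x => (abs_le.1 (h x)).2⟩

lemma E_sub_abs_le {u : X →₀ ℝ} (hu : u ∈ Δf X) {f g : X → ℝ} {c : ℝ}
    (h : ∀ x, |f x - g x| ≤ c) : |E u f - E u g| ≤ c := by
  rw [← E_fsub]; exact E_abs_le hu h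

/-- nonneg and total mass one via `E`. -/
lemma mem_Δf_iff (u : X →₀ ℝ) : u ∈ Δf X ↔ (∀ x, 0 ≤ u x) ∧ E u (fun _ => 1) = 1 := by
  simp [Δf, E]

lemma single_mem (x : X) : Finsupp.single x (1:ℝ) ∈ Δf X := by
  classical
  rw [mem_Δf_iff, E_single]
  refine ⟨fun y => ?_, by simp⟩
  rw [Finsupp.single_apply]; split_ifs <;> norm_num

lemma convex_Δf : Convex ℝ (Δf X) := by
  intro u hu v hv a b ha hb hab
  rw [mem_Δf_iff] at *
  refine ⟨fun x => ?_, ?_⟩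
  · have := mul_nonneg ha (hu.1 x)
    have := mul_nonneg hb (hv.1 x)
    simp; linarith
  · rw [E_add, E_smul, E_smul, hu.2, hv.2]; linarith

lemma E_bind (u : X →₀ ℝ) (f : X → X →₀ ℝ) (g : X → ℝ) :
    E (u.sum fun x a => a • f x) g = E u (fun x => E (f x) g) := by
  unfold Finsupp.sum
  rw [E_sum]
  simp only [E_smul]
  rfl

end basicE

section house
variable {X : Type*} {F : X → Set (X →₀ ℝ)}

lemma conv_sub (hFΔ : ∀ x, F x ⊆ Δf X) (x : X) : convexHull ℝ (F x) ⊆ Δf X :=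
  convexHull_min (hFΔ x) convex_Δf

lemma bind_nonneg {u : X →₀ ℝ} (hu : ∀ x, 0 ≤ u x) {f : X → X →₀ ℝ} (hf : ∀ x, f x ∈ Δf X) (y : X) :
    0 ≤ (u.sum fun x a => a • f x) y := by
  rw [Finsupp.sum_apply]
  refine Finset.sum_nonneg fun x _ => ?_
  exact mul_nonneg (hu x) ((hf x).1 y)

lemma Fhat_nonneg (hFΔ : ∀ x, F x ⊆ Δf X) {u v : X →₀ ℝ} (hu : ∀ x, 0 ≤ u x) (hv : v ∈ Fhat F u) :
    ∀ x, 0 ≤ v x := by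
  obtain ⟨f, hf, rfl⟩ := hv
  exact bind_nonneg hu fun x => conv_sub hFΔ x (hf x)

lemma Fhat_sub (hFΔ : ∀ x, F x ⊆ Δf X) {u v : X →₀ ℝ} (hu : u ∈ Δf X) (hv : v ∈ Fhat F u) :
    v ∈ Δf X := by
  rw [mem_Δf_iff]
  refine ⟨Fhat_nonneg hFΔ hu.1 hv, ?_⟩
  obtain ⟨f, hf, rfl⟩ := hv
  rw [E_bind]
  have : (fun x => E (f x) fun _ => (1:ℝ)) = fun _ => 1 := by
    funext x; exact E_one (conv_sub hFΔ x (hf x))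
  rw [this, E_one hu]

lemma Fhat_single (x : X) : Fhat F (Finsupp.single x 1) = convexHull ℝ (F x) ∨ (∃ y, F y = ∅) := by
  classical
  by_cases h : ∃ y, F y = ∅
  · exact Or.inr h
  · left
    push Not at h
    ext v
    constructor
    · rintro ⟨f, hf, rfl⟩
      simpa using hf x
    · intro hv
      refine ⟨fun y => if y = x then v else (h y).some, fun y => ?_, by simp⟩
      dsimp only
      split_ifs with hy
      · rw [hy]; exact hv
      · exact subset_convexHull _ _ (h y).some_mem

lemma Fhat_dirac (hFne : ∀ x, (F x).Nonempty) (x : X) :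
    Fhat F (Finsupp.single x 1) = convexHull ℝ (F x) := by
  rcases Fhat_single (F := F) x with h | ⟨y, hy⟩
  · exact h
  · exact absurd hy (hFne y).ne_empty

lemma Fhat_smul {u v : X →₀ ℝ} (a : ℝ) (hv : v ∈ Fhat F u) : a • v ∈ Fhat F (a • u) := by
  obtain ⟨f, hf, rfl⟩ := hv
  refine ⟨f, hf, ?_⟩
  rw [Finsupp.sum_smul_index (by simp), Finsupp.smul_sum]
  simp [mul_smul]

lemma Fhat_add {u v u' v' : X →₀ ℝ} (hu : ∀ x, 0 ≤ u x) (hu' : ∀ x, 0 ≤ u' x)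
    (hv : v ∈ Fhat F u) (hv' : v' ∈ Fhat F u') : v + v' ∈ Fhat F (u + u') := by
  classical
  obtain ⟨f, hf, rfl⟩ := hv
  obtain ⟨f', hf', rfl⟩ := hv'
  refine ⟨fun x => if u x + u' x = 0 then f x else
    (u x / (u x + u' x)) • f x + (u' x / (u x + u' x)) • f' x, fun x => ?_, ?_⟩
  · dsimp only
    split_ifs with h
    · exact hf x
    · have hp : 0 < u x + u' x := lt_of_le_of_ne (add_nonneg (hu x) (hu' x)) (Ne.symm h)
      refine convex_convexHull ℝ (F x) (hf x) (hf' x) (div_nonneg (hu x) hp.le)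
        (div_nonneg (hu' x) hp.le) ?_
      field_simp
  · rw [Finsupp.sum_of_support_subset u (s := u.support ∪ u'.support) (by simp) _ (by simp),
      Finsupp.sum_of_support_subset u' (s := u.support ∪ u'.support) (by simp) _ (by simp),
      Finsupp.sum_of_support_subset (u + u') (s := u.support ∪ u'.support)
        Finsupp.support_add _ (by simp), ← Finset.sum_add_distrib]
    refine Finset.sum_congr rfl fun x _ => ?_
    dsimp only
    split_ifs with h
    · have h1 : u x = 0 := by have := hu x; have := hu' x; linarith
      have h2 : u' x = 0 := by have := hu x; have := hu' x; linarith
      simp [h1, h2]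
    · rw [Finsupp.add_apply, smul_add, smul_smul, smul_smul, mul_div_cancel₀ _ h, mul_div_cancel₀ _ h]

lemma Fhat_convex {u : X →₀ ℝ} (hu : ∀ x, 0 ≤ u x) : Convex ℝ (Fhat F u) := by
  intro v hv v' hv' a b ha hb hab
  have := Fhat_add (u := a • u) (u' := b • u) (fun x => mul_nonneg ha (hu x))
    (fun x => mul_nonneg hb (hu x)) (Fhat_smul a hv) (Fhat_smul b hv')
  rwa [← add_smul, hab, one_smul] at this

lemma Fhat_zero (hFne : ∀ x, (F x).Nonempty) : (0 : X →₀ ℝ) ∈ Fhat F 0 :=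
  ⟨fun x => (hFne x).some, fun x => subset_convexHull _ _ (hFne x).some_mem, by simp⟩

lemma Fhat_sum (hFne : ∀ x, (F x).Nonempty) (N : ℕ) (c : ℕ → ℝ) (hc : ∀ t, 0 ≤ c t)
    (u v : ℕ → X →₀ ℝ)
    (hu : ∀ t x, 0 ≤ u t x) (h : ∀ t, v t ∈ Fhat F (u t)) :
    (∑ t ∈ Finset.range N, c t • v t) ∈ Fhat F (∑ t ∈ Finset.range N, c t • u t) := by
  induction N with
  | zero => simpa using Fhat_zero hFne
  | succ n ih =>
    rw [Finset.sum_range_succ, Finset.sum_range_succ]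
    refine Fhat_add (fun x => ?_) (fun x => mul_nonneg (hc n) (hu n x)) ih (Fhat_smul _ (h n))
    rw [Finsupp.finsetSum_apply]
    exact Finset.sum_nonneg fun t _ => mul_nonneg (hc t) (hu t x)

lemma Fhat_nonempty (hFne : ∀ x, (F x).Nonempty) (u : X →₀ ℝ) : (Fhat F u).Nonempty :=
  ⟨_, fun x => (hFne x).some, fun x => subset_convexHull _ _ (hFne x).some_mem, rfl⟩

/-- The one-step operator. -/
noncomputable def T (F : X → Set (X →₀ ℝ)) (f : X → ℝ) (x : X) : ℝ := sSup ((fun u => E u f) '' F x)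

/-- bounded functions -/
def Bd (f : X → ℝ) : Prop := ∃ B, ∀ x, |f x| ≤ B

lemma T_bdd (hFΔ : ∀ x, F x ⊆ Δf X) {f : X → ℝ} (hf : Bd f) (x : X) :
    BddAbove ((fun u => E u f) '' F x) := by
  obtain ⟨B, hB⟩ := hf
  refine ⟨B, ?_⟩
  rintro _ ⟨u, hu, rfl⟩
  exact (abs_le.1 (E_abs_le (hFΔ x hu) hB)).2

lemma le_T (hFΔ : ∀ x, F x ⊆ Δf X) {f : X → ℝ} (hf : Bd f) {x : X} {u : X →₀ ℝ} (hu : u ∈ F x) :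
    E u f ≤ T F f x := le_csSup (T_bdd hFΔ hf x) ⟨u, hu, rfl⟩

lemma T_le (hFne : ∀ x, (F x).Nonempty) {f : X → ℝ} {x : X} {c : ℝ} (h : ∀ u ∈ F x, E u f ≤ c) :
    T F f x ≤ c := by
  refine csSup_le ((hFne x).image _) ?_
  rintro _ ⟨u, hu, rfl⟩
  exact h u hu

lemma conv_le_T (hFΔ : ∀ x, F x ⊆ Δf X) {f : X → ℝ} (hf : Bd f) {x : X} {u : X →₀ ℝ}
    (hu : u ∈ convexHull ℝ (F x)) : E u f ≤ T F f x := by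
  have : convexHull ℝ (F x) ⊆ {u | E u f ≤ T F f x} := by
    refine convexHull_min (fun u hu => le_T hFΔ hf hu) ?_
    intro u hu v hv a b ha hb hab
    simp only [mem_ofPred_eq, E_add, E_smul] at *
    calc _ ≤ a * T F f x + b * T F f x := by gcongr
      _ = _ := by rw [← add_mul, hab, one_mul]
  exact this hu

lemma Fhat_le_T (hFΔ : ∀ x, F x ⊆ Δf X) {f : X → ℝ} (hf : Bd f) {u v : X →₀ ℝ}
    (hu : ∀ x, 0 ≤ u x) (hv : v ∈ Fhat F u) : E v f ≤ E u (T F f) := by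
  obtain ⟨g, hg, rfl⟩ := hv
  rw [E_bind]
  exact E_mono hu fun x => conv_le_T hFΔ hf (hg x)

lemma Fhat_near_T (hFne : ∀ x, (F x).Nonempty) (f : X → ℝ) {u : X →₀ ℝ}
    (hu : u ∈ Δf X) {η : ℝ} (hη : 0 < η) : ∃ v ∈ Fhat F u, E u (T F f) - η ≤ E v f := by
  have : ∀ x, ∃ v ∈ F x, T F f x - η ≤ E v f := by
    intro x
    obtain ⟨_, ⟨v, hv, rfl⟩, h⟩ := exists_lt_of_lt_csSup ((hFne x).image (fun u => E u f))
      (show T F f x - η < sSup _ by unfold T; linarith)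
    exact ⟨v, hv, h.le⟩
  choose g hg hg' using this
  refine ⟨_, ⟨g, fun x => subset_convexHull _ _ (hg x), rfl⟩, ?_⟩
  rw [E_bind]
  calc _ = E u (fun x => T F f x - η) := by rw [E_fsub, E_const hu]
    _ ≤ _ := E_mono hu.1 hg'

lemma T_sub_abs_le (hFne : ∀ x, (F x).Nonempty) (hFΔ : ∀ x, F x ⊆ Δf X) {f g : X → ℝ} {c : ℝ}
    (hf : Bd f) (hg : Bd g)
    (h : ∀ x, |f x - g x| ≤ c) (x : X) : |T F f x - T F g x| ≤ c := by
  rw [abs_le]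
  constructor
  · have : T F g x ≤ T F f x + c := T_le hFne fun u hu => by
      have := abs_le.1 (E_sub_abs_le (hFΔ x hu) h)
      have := le_T hFΔ hf hu
      linarith
    linarith
  · have : T F f x ≤ T F g x + c := T_le hFne fun u hu => by
      have := abs_le.1 (E_sub_abs_le (hFΔ x hu) h)
      have := le_T hFΔ hg hu
      linarith
    linarith

lemma T_abs_le (hFne : ∀ x, (F x).Nonempty) (hFΔ : ∀ x, F x ⊆ Δf X) {f : X → ℝ} {c : ℝ}
    (h : ∀ x, |f x| ≤ c) (x : X) : |T F f x| ≤ c := by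
  have hz : T F (fun _ => (0:ℝ)) x = 0 := by
    apply le_antisymm
    · exact T_le hFne fun u hu => (E_const (hFΔ x hu) 0).le
    · obtain ⟨u, hu⟩ := hFne x
      have h1 := le_T hFΔ (f := fun _ => (0:ℝ)) ⟨0, by simp⟩ hu
      rwa [E_const (hFΔ x hu) 0] at h1
  have := T_sub_abs_le hFne hFΔ (g := fun _ => 0) ⟨c, h⟩ ⟨0, by simp⟩ (by simpa using h) x
  simpa [hz] using this

lemma T_mono (hFne : ∀ x, (F x).Nonempty) (hFΔ : ∀ x, F x ⊆ Δf X) {f g : X → ℝ}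
    (hg : Bd g) (h : ∀ x, f x ≤ g x) (x : X) : T F f x ≤ T F g x :=
  T_le hFne fun _ hu => (E_mono (hFΔ x hu).1 h).trans (le_T hFΔ hg hu)

end house

section metric
variable {X : Type*} [MetricSpace X] [CompactSpace X] {F : X → Set (X →₀ ℝ)}

/-- real-constant Lipschitz -/
def Lp (L : ℝ) (g : X → ℝ) : Prop := ∀ x y, |g x - g y| ≤ L * dist x y

lemma Lp.bd {L : ℝ} {g : X → ℝ} (hL : 0 ≤ L) (hg : Lp L g) : Bd g := by
  rcases isEmpty_or_nonempty X with h | ⟨⟨x0⟩⟩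
  · exact ⟨0, fun x => (h.false x).elim⟩
  · refine ⟨|g x0| + L * Metric.diam (univ : Set X), fun x => ?_⟩
    have h1 := hg x x0
    have h2 : dist x x0 ≤ Metric.diam (univ : Set X) :=
      Metric.dist_le_diam_of_mem isCompact_univ.isBounded (mem_univ _) (mem_univ _)
    have h3 : |g x| ≤ |g x - g x0| + |g x0| := by
      have := abs_add_le (g x - g x0) (g x0); simpa using this
    have := mul_le_mul_of_nonneg_left h2 hL
    linarith

lemma E_sub_le_dKR {u v : X →₀ ℝ} (hu : u ∈ Δf X) (hv : v ∈ Δf X) {f : X → ℝ} (hf : Lp 1 f) :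
    E u f - E v f ≤ dKR u v := by
  refine le_csSup ⟨Metric.diam (univ : Set X), ?_⟩ ⟨f, ?_, rfl⟩
  · rintro _ ⟨g, hg, rfl⟩
    change E u g - E v g ≤ _
    have : ∀ y, E u g ≤ g y + Metric.diam (univ : Set X) := fun y => E_le hu fun x => by
      have h1 := hg.dist_le_mul x y
      rw [Real.dist_eq] at h1
      have h2 : dist x y ≤ Metric.diam (univ : Set X) :=
        Metric.dist_le_diam_of_mem isCompact_univ.isBounded (mem_univ _) (mem_univ _)
      have := le_abs_self (g x - g y)
      simp at h1
      linarith
    have h3 : E u g - Metric.diam (univ : Set X) ≤ E v g := le_E hv fun y => by linarith [this y]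
    linarith
  · exact LipschitzWith.of_dist_le_mul fun x y => by simpa [Real.dist_eq] using hf x y

lemma E_sub_le_mul_dKR {u v : X →₀ ℝ} (hu : u ∈ Δf X) (hv : v ∈ Δf X) {L : ℝ} (hL : 0 < L)
    {f : X → ℝ} (hf : Lp L f) :
    E u f - E v f ≤ L * dKR u v := by
  have h1 : Lp 1 (fun x => L⁻¹ * f x) := fun x y => by
    rw [← mul_sub, abs_mul, abs_of_pos (inv_pos.2 hL), one_mul, inv_mul_le_iff₀ hL]
    exact hf x y
  have := E_sub_le_dKR hu hv h1
  rw [E_fmul, E_fmul, ← mul_sub, inv_mul_le_iff₀ hL] at this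
  exact this

/-- non-expansiveness hypothesis -/
def NE (F : X → Set (X →₀ ℝ)) : Prop := ∀ x x' : X, ∀ u ∈ F x, ∃ u' ∈ F x', dKR u u' ≤ dist x x'

lemma T_Lp (hFne : ∀ x, (F x).Nonempty) (hFΔ : ∀ x, F x ⊆ Δf X) (hexp : NE F)
    {L : ℝ} (hL : 0 ≤ L) {f : X → ℝ} (hf : Lp L f) : Lp L (T F f) := by
  have hb := hf.bd hL
  have key : ∀ x y, ∀ η > 0, T F f x ≤ T F f y + (L + η) * dist x y := by
    intro x y η hη
    refine T_le hFne fun u hu => ?_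
    obtain ⟨u', hu', hd⟩ := hexp x y u hu
    have hf' : Lp (L + η) f := fun x y => (hf x y).trans (by gcongr; linarith)
    have h1 := E_sub_le_mul_dKR (hFΔ x hu) (hFΔ y hu') (by linarith) hf'
    have h2 := le_T hFΔ hb hu'
    have h3 : (L + η) * dKR u u' ≤ (L + η) * dist x y := by gcongr
    linarith
  have key2 : ∀ x y, T F f x ≤ T F f y + L * dist x y := by
    intro x y
    refine le_of_forall_pos_le_add fun η hη => ?_
    have hp : 0 < 1 + dist x y := by positivity
    have := key x y (η / (1 + dist x y)) (div_pos hη hp)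
    have h2 : η / (1 + dist x y) * dist x y ≤ η := by
      rw [div_mul_eq_mul_div, div_le_iff₀ hp]; nlinarith
    linarith
  intro x y
  rw [abs_le]
  have := key2 x y
  have := key2 y x
  rw [dist_comm y x] at this
  constructor <;> linarith

/-- approximately Lipschitz -/
def AL (L e : ℝ) (f : X → ℝ) : Prop := ∃ g, Lp L g ∧ ∀ x, |f x - g x| ≤ e

lemma AL.bd {L e : ℝ} {f : X → ℝ} (hL : 0 ≤ L) (hf : AL L e f) : Bd f := by
  obtain ⟨g, hg, h⟩ := hf
  obtain ⟨B, hB⟩ := hg.bd hL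
  refine ⟨B + e, fun x => ?_⟩
  have := abs_add_le (f x - g x) (g x)
  rw [sub_add_cancel] at this
  linarith [h x, hB x]

lemma AL_T (hFne : ∀ x, (F x).Nonempty) (hFΔ : ∀ x, F x ⊆ Δf X) (hexp : NE F)
    {L e : ℝ} (hL : 0 ≤ L) {f : X → ℝ} (hf : AL L e f) : AL L e (T F f) := by
  have hb := hf.bd hL
  obtain ⟨g, hg, h⟩ := hf
  exact ⟨T F g, T_Lp hFne hFΔ hexp hL hg, T_sub_abs_le hFne hFΔ hb (hg.bd hL) h⟩

lemma AL_add {L e L' e' a : ℝ} (ha : 0 ≤ a) {f f' : X → ℝ} (hf : AL L e f) (hf' : AL L' e' f') :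
    AL (a * L + L') (a * e + e') (fun x => a * f x + f' x) := by
  obtain ⟨g, hg, h⟩ := hf
  obtain ⟨g', hg', h'⟩ := hf'
  refine ⟨fun x => a * g x + g' x, fun x y => ?_, fun x => ?_⟩
  · calc |a * g x + g' x - (a * g y + g' y)| = |a * (g x - g y) + (g' x - g' y)| := by ring_nf
      _ ≤ |a * (g x - g y)| + |g' x - g' y| := abs_add_le _ _
      _ ≤ a * (L * dist x y) + L' * dist x y := by
        rw [abs_mul, abs_of_nonneg ha]
        have := hg x y; have := hg' x y; gcongr
      _ = _ := by ring
  · calc |a * f x + f' x - (a * g x + g' x)| = |a * (f x - g x) + (f' x - g' x)| := by ring_nf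
      _ ≤ |a * (f x - g x)| + |f' x - g' x| := abs_add_le _ _
      _ ≤ _ := by
        rw [abs_mul, abs_of_nonneg ha]
        have := h x; have := h' x; gcongr

lemma AL.mod {L e : ℝ} {f : X → ℝ} (hf : AL L e f) (x y : X) : |f x - f y| ≤ L * dist x y + 2 * e := by
  obtain ⟨g, hg, h⟩ := hf
  have h1 := abs_le.1 (h x)
  have h2 := abs_le.1 (h y)
  have h3 := abs_le.1 (hg x y)
  rw [abs_le]; constructor <;> linarith

/-- continuous functions on compact metric spaces are uniformly approximable by Lipschitz ones -/
lemma exists_AL {f : X → ℝ} (hf : Continuous f) {e : ℝ} (he : 0 < e) : ∃ L, 0 ≤ L ∧ AL L e f := by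
  rcases isEmpty_or_nonempty X with h | hne
  · exact ⟨0, le_rfl, f, fun x => (h.false x).elim, fun x => (h.false x).elim⟩
  obtain ⟨B, hB⟩ : ∃ B, ∀ x, |f x| ≤ B := by
    obtain ⟨B, hB⟩ := isCompact_univ.exists_bound_of_continuousOn (f := f) hf.continuousOn
    exact ⟨B, fun x => hB x (mem_univ x)⟩
  have hB0 : 0 ≤ B := (abs_nonneg _).trans (hB (Classical.arbitrary X))
  have huc := CompactSpace.uniformContinuous_of_continuous hf
  obtain ⟨δ, hδ, hd⟩ := Metric.uniformContinuous_iff.1 huc e he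
  set L := 2 * B / δ with hL
  have hL0 : 0 ≤ L := by positivity
  have hmod : ∀ x y, f x ≤ f y + L * dist x y + e := by
    intro x y
    by_cases hxy : dist x y < δ
    · have := hd hxy
      rw [Real.dist_eq, abs_lt] at this
      have := mul_nonneg hL0 (dist_nonneg (x := x) (y := y))
      linarith
    · push Not at hxy
      have h1 : 2 * B ≤ L * dist x y := by
        calc 2 * B = L * δ := by rw [hL]; field_simp
          _ ≤ _ := by gcongr
      have := abs_le.1 (hB x); have := abs_le.1 (hB y)
      linarith
  have hbd : ∀ x, BddBelow (range fun y => f y + L * dist x y) := fun x => ⟨-B, by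
    rintro _ ⟨y, rfl⟩
    have := abs_le.1 (hB y)
    have := mul_nonneg hL0 (dist_nonneg (x := x) (y := y))
    dsimp only; linarith⟩
  have hlip : ∀ x z, (⨅ y, (f y + L * dist x y)) ≤ (⨅ y, (f y + L * dist z y)) + L * dist x z := by
    intro x z
    rw [← sub_le_iff_le_add]
    refine le_ciInf fun y => ?_
    have h1 := ciInf_le (hbd x) y
    have h2 := mul_le_mul_of_nonneg_left (dist_triangle x z y) hL0
    linarith
  refine ⟨L, hL0, fun x => ⨅ y, (f y + L * dist x y), fun x z => ?_, fun x => ?_⟩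
  · have h1 := hlip x z
    have h2 := hlip z x
    rw [dist_comm z x] at h2
    rw [abs_le]; constructor <;> linarith
  · have h1 := ciInf_le (hbd x) x
    simp only [dist_self, mul_zero, add_zero] at h1
    have h2 : f x - e ≤ ⨅ y, (f y + L * dist x y) := le_ciInf fun y => by linarith [hmod x y]
    rw [abs_le]; constructor <;> linarith

lemma cont_of_AL {f : X → ℝ} (h : ∀ e > 0, ∃ L, 0 ≤ L ∧ AL L e f) : Continuous f := by
  rw [Metric.continuous_iff]
  intro y e he
  obtain ⟨L, hL, hf⟩ := h (e / 4) (by linarith)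
  refine ⟨e / (4 * (L + 1)), by positivity, fun x hx => ?_⟩
  have := hf.mod x y
  rw [Real.dist_eq]
  have h2 : L * dist x y ≤ (L + 1) * (e / (4 * (L + 1))) := by gcongr; linarith
  have h3 : (L + 1) * (e / (4 * (L + 1))) = e / 4 := by field_simp
  linarith

lemma T_cont (hFne : ∀ x, (F x).Nonempty) (hFΔ : ∀ x, F x ⊆ Δf X) (hexp : NE F)
    {f : X → ℝ} (hf : Continuous f) : Continuous (T F f) :=
  cont_of_AL fun e he => by
    obtain ⟨L, hL, h⟩ := exists_AL hf he
    exact ⟨L, hL, AL_T hFne hFΔ hexp hL h⟩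

lemma bd_of_cont {f : X → ℝ} (hf : Continuous f) : Bd f := by
  obtain ⟨L, hL, h⟩ := exists_AL hf one_pos
  exact h.bd hL

end metric
end Stmt15


namespace Stmt15
set_option linter.unusedSectionVars false

section W
variable {X : Type*} {F : X → Set (X →₀ ℝ)}

/-- finite horizon values -/
noncomputable def W (F : X → Set (X →₀ ℝ)) (r : X → ℝ) : ℕ → (ℕ → ℝ) → X → ℝ
  | 0, _ => fun _ => 0
  | N + 1, θ => T F (fun x => θ 0 * r x + W F r N (fun t => θ (t + 1)) x)

lemma W_bd (hFne : ∀ x, (F x).Nonempty) (hFΔ : ∀ x, F x ⊆ Δf X) {r : X → ℝ} (hr : Bd r) (N : ℕ)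
    (θ : ℕ → ℝ) : Bd (W F r N θ) ∧ Bd (fun x => θ 0 * r x + W F r N (fun t => θ (t + 1)) x) := by
  have aux : ∀ g : X → ℝ, Bd g → ∀ a : ℝ, Bd (fun x => a * r x + g x) := by
    rintro g ⟨C, hC⟩ a
    obtain ⟨B, hB⟩ := hr
    refine ⟨|a| * B + C, fun x => (abs_add_le _ _).trans ?_⟩
    rw [abs_mul]
    have := hB x; have := hC x; gcongr
  have main : ∀ θ, Bd (W F r N θ) := by
    induction N with
    | zero => exact fun θ => ⟨0, by simp [W]⟩
    | succ n ih =>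
      intro θ
      obtain ⟨C, hC⟩ := aux _ (ih (fun t => θ (t + 1))) (θ 0)
      exact ⟨C, T_abs_le hFne hFΔ hC⟩
  exact ⟨main θ, aux _ (main _) _⟩

/-- chains -/
def Ch (F : X → Set (X →₀ ℝ)) (s : ℕ → X →₀ ℝ) : Prop := ∀ t, s (t + 1) ∈ Fhat F (s t)

lemma Ch.mem (hFΔ : ∀ x, F x ⊆ Δf X) {s : ℕ → X →₀ ℝ} (hs : Ch F s) (h0 : s 0 ∈ Δf X) (t : ℕ) :
    s t ∈ Δf X := by
  induction t with
  | zero => exact h0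
  | succ n ih => exact Fhat_sub hFΔ ih (hs n)

/-- prepend -/
def cons {A : Type*} (a : A) (s : ℕ → A) : ℕ → A
  | 0 => a
  | n + 1 => s n

lemma play_cons (hFne : ∀ x, (F x).Nonempty) {x : X} {σ : ℕ → X →₀ ℝ} (h : IsPlay F x σ) :
    Ch F (cons (Finsupp.single x 1) σ) := by
  intro t
  cases t with
  | zero =>
    change σ 0 ∈ Fhat F (Finsupp.single x 1)
    rw [Fhat_dirac hFne]; exact h.1
  | succ n => exact h.2 n

lemma chain_play (hFne : ∀ x, (F x).Nonempty) {x : X} {s : ℕ → X →₀ ℝ} (h : Ch F s)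
    (h0 : s 0 = Finsupp.single x 1) : IsPlay F x (fun t => s (t + 1)) := by
  refine ⟨?_, fun t => h _⟩
  rw [← Fhat_dirac hFne, ← h0]; exact h 0

lemma exists_chain (hFne : ∀ x, (F x).Nonempty) (u : X →₀ ℝ) : ∃ s, Ch F s ∧ s 0 = u :=
  ⟨fun t => Nat.rec u (fun _ v => (Fhat_nonempty hFne v).some) t,
    fun t => (Fhat_nonempty hFne _).some_mem, rfl⟩

lemma W_upper (hFne : ∀ x, (F x).Nonempty) (hFΔ : ∀ x, F x ⊆ Δf X) {r : X → ℝ} (hr : Bd r) (N : ℕ) :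
    ∀ (θ : ℕ → ℝ) (s : ℕ → X →₀ ℝ), Ch F s → s 0 ∈ Δf X →
    ∑ t ∈ Finset.range N, θ t * E (s (t + 1)) r ≤ E (s 0) (W F r N θ) := by
  induction N with
  | zero => intro θ s hs h0; simp [W, E]
  | succ n ih =>
    intro θ s hs h0
    rw [Finset.sum_range_succ']
    have h1 := ih (fun t => θ (t + 1)) (fun t => s (t + 1)) (fun t => hs _) (hs.mem hFΔ h0 1)
    have h2 := Fhat_le_T hFΔ (W_bd hFne hFΔ hr n θ).2 h0.1 (hs 0)
    rw [E_fadd, E_fmul] at h2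
    simp only [W]
    simp only [zero_add] at *
    linarith

lemma W_lower (hFne : ∀ x, (F x).Nonempty) (hFΔ : ∀ x, F x ⊆ Δf X) (r : X → ℝ) {η : ℝ}
    (hη : 0 < η) (N : ℕ) :
    ∀ (θ : ℕ → ℝ) (u : X →₀ ℝ), u ∈ Δf X → ∃ s, Ch F s ∧ s 0 = u ∧
    E u (W F r N θ) - N * η ≤ ∑ t ∈ Finset.range N, θ t * E (s (t + 1)) r := by
  induction N with
  | zero =>
    intro θ u hu
    obtain ⟨s, h1, h2⟩ := exists_chain hFne u
    exact ⟨s, h1, h2, by simp [W, E]⟩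
  | succ n ih =>
    intro θ u hu
    obtain ⟨v, hv, h1⟩ := Fhat_near_T hFne (fun x => θ 0 * r x + W F r n (fun t => θ (t + 1)) x) hu hη
    obtain ⟨s, hs, hs0, h2⟩ := ih (fun t => θ (t + 1)) v (Fhat_sub hFΔ hu hv)
    refine ⟨cons u s, ?_, rfl, ?_⟩
    · intro t
      cases t with
      | zero => change s 0 ∈ Fhat F u; rw [hs0]; exact hv
      | succ n => exact hs n
    · rw [Finset.sum_range_succ']
      rw [E_fadd, E_fmul] at h1
      simp only [W, cons]
      push_cast
      rw [hs0]
      linarith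

/-- change of evaluation -/
lemma W_theta (hFne : ∀ x, (F x).Nonempty) (hFΔ : ∀ x, F x ⊆ Δf X) {r : X → ℝ}
    (hr01 : ∀ x, r x ∈ Icc (0:ℝ) 1) (N : ℕ) : ∀ (θ θ' : ℕ → ℝ) (x : X),
    |W F r N θ x - W F r N θ' x| ≤ ∑ t ∈ Finset.range N, |θ t - θ' t| := by
  have hr : Bd r := ⟨1, fun x => abs_le.2 ⟨by linarith [(hr01 x).1], (hr01 x).2⟩⟩
  induction N with
  | zero => simp [W]
  | succ n ih =>
    intro θ θ' x
    refine T_sub_abs_le hFne hFΔ (W_bd hFne hFΔ hr n θ).2 (W_bd hFne hFΔ hr n θ').2 (fun y => ?_) x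
    rw [Finset.sum_range_succ']
    have h1 := ih (fun t => θ (t + 1)) (fun t => θ' (t + 1)) y
    calc _ = |(W F r n (fun t => θ (t + 1)) y - W F r n (fun t => θ' (t + 1)) y) +
          (θ 0 - θ' 0) * r y| := by ring_nf
      _ ≤ _ + |(θ 0 - θ' 0) * r y| := abs_add_le _ _
      _ ≤ _ := by
        rw [abs_mul, abs_of_nonneg (hr01 y).1]
        have := mul_le_mul_of_nonneg_left (hr01 y).2 (abs_nonneg (θ 0 - θ' 0))
        linarith

end W

section val
variable {X : Type*} [MetricSpace X] [CompactSpace X] {F : X → Set (X →₀ ℝ)}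

lemma W_AL (hFne : ∀ x, (F x).Nonempty) (hFΔ : ∀ x, F x ⊆ Δf X) (hexp : NE F)
    {r : X → ℝ} {L e : ℝ} (hL : 0 ≤ L) (hr : AL L e r) (N : ℕ) : ∀ (θ : ℕ → ℝ), (∀ t, 0 ≤ θ t) →
    AL ((∑ t ∈ Finset.range N, θ t) * L) ((∑ t ∈ Finset.range N, θ t) * e) (W F r N θ) := by
  induction N with
  | zero => exact fun θ h => ⟨fun _ => 0, fun x y => by simp, fun x => by simp [W]⟩
  | succ n ih =>
    intro θ h
    have h1 := AL_add (h 0) hr (ih (fun t => θ (t + 1)) (fun t => h _))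
    have h2 := AL_T hFne hFΔ hexp (by
      have := Finset.sum_nonneg (s := Finset.range n) (fun t _ => h (t + 1))
      have := h 0
      positivity) h1
    rw [Finset.sum_range_succ', add_comm, add_mul, add_mul]
    exact h2

lemma IsEval.summable {θ : ℕ → ℝ} (h : IsEval θ) : Summable θ := by
  by_contra hn
  have := h.2
  rw [tsum_eq_zero_of_not_summable hn] at this
  norm_num at this

lemma IsEval.hasSum {θ : ℕ → ℝ} (h : IsEval θ) : HasSum θ 1 := h.2 ▸ h.summable.hasSum

lemma IsEval.sum_le {θ : ℕ → ℝ} (h : IsEval θ) (N : ℕ) : ∑ t ∈ Finset.range N, θ t ≤ 1 :=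
  sum_le_hasSum _ (fun t _ => h.1 t) h.hasSum

lemma IsEval.imp_summable {θ : ℕ → ℝ} (h : IsEval θ) : Summable (fun t => |θ (t + 1) - θ t|) := by
  have h1 := h.summable
  have h2 : Summable (fun t => θ (t + 1)) := (summable_nat_add_iff 1).2 h1
  refine Summable.of_nonneg_of_le (fun t => abs_nonneg _) (fun t => ?_) (h2.add h1)
  rw [abs_le]; constructor <;> linarith [h.1 t, h.1 (t + 1)]

lemma IsEval.imp_sum_le {θ : ℕ → ℝ} (h : IsEval θ) (N : ℕ) :
    ∑ t ∈ Finset.range N, |θ (t + 1) - θ t| ≤ impatience θ :=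
  h.imp_summable.sum_le_tsum _ (fun t _ => abs_nonneg _)

lemma IsEval.imp_nonneg (θ : ℕ → ℝ) : 0 ≤ impatience θ := tsum_nonneg fun _ => abs_nonneg _

lemma IsEval.le_imp {θ : ℕ → ℝ} (h : IsEval θ) (t : ℕ) : θ t ≤ impatience θ := by
  have h1 : Filter.Tendsto (fun n => θ (n + t)) Filter.atTop (nhds 0) :=
    (Filter.tendsto_add_atTop_iff_nat t).2 h.summable.tendsto_atTop_zero
  have h2 : ∀ n, θ t - θ (n + t) ≤ impatience θ := by
    intro n
    have e1 : ∑ i ∈ Finset.range n, (θ (i + t) - θ (i + 1 + t)) = θ (0 + t) - θ (n + t) :=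
      Finset.sum_range_sub' (fun i => θ (i + t)) n
    have e2 : ∑ i ∈ Finset.range n, (θ (i + t) - θ (i + 1 + t))
        ≤ ∑ i ∈ Finset.range n, |θ (i + t + 1) - θ (i + t)| := by
      refine Finset.sum_le_sum fun i _ => ?_
      rw [abs_sub_comm, show i + 1 + t = i + t + 1 by ring]
      exact le_abs_self _
    have e3 : ∑ i ∈ Finset.range n, |θ (i + t + 1) - θ (i + t)|
        ≤ ∑ j ∈ Finset.range (n + t), |θ (j + 1) - θ j| := by
      rw [add_comm n t, Finset.sum_range_add]
      have : ∀ i, |θ (i + t + 1) - θ (i + t)| = |θ (t + i + 1) - θ (t + i)| := by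
        intro i; rw [add_comm i t]
      simp only [this]
      have := Finset.sum_nonneg (s := Finset.range t) (fun j _ => abs_nonneg (θ (j + 1) - θ j))
      linarith
    have := h.imp_sum_le (n + t)
    rw [zero_add] at e1
    linarith
  have h3 : Filter.Tendsto (fun n => θ t - θ (n + t)) Filter.atTop (nhds (θ t - 0)) :=
    tendsto_const_nhds.sub h1
  rw [sub_zero] at h3
  exact le_of_tendsto' h3 h2

section pay
variable {r : X → ℝ} (hr01 : ∀ x, r x ∈ Icc (0:ℝ) 1)

lemma E01 (hr01 : ∀ x, r x ∈ Icc (0:ℝ) 1) {u : X →₀ ℝ} (hu : u ∈ Δf X) : E u r ∈ Icc (0:ℝ) 1 :=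
  ⟨le_E hu fun x => (hr01 x).1, E_le hu fun x => (hr01 x).2⟩

lemma pay_summable (hr01 : ∀ x, r x ∈ Icc (0:ℝ) 1) {θ : ℕ → ℝ} (h : IsEval θ) {σ : ℕ → X →₀ ℝ}
    (hσ : ∀ t, σ t ∈ Δf X) : Summable (fun t => θ t * E (σ t) r) :=
  Summable.of_nonneg_of_le (fun t => mul_nonneg (h.1 t) (E01 hr01 (hσ t)).1)
    (fun t => mul_le_of_le_one_right (h.1 t) (E01 hr01 (hσ t)).2) h.summable

lemma pay_eq (θ : ℕ → ℝ) (σ : ℕ → X →₀ ℝ) : payoff r θ σ = ∑' t, θ t * E (σ t) r := rfl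

lemma pay_ge (hr01 : ∀ x, r x ∈ Icc (0:ℝ) 1) {θ : ℕ → ℝ} (h : IsEval θ) {σ : ℕ → X →₀ ℝ}
    (hσ : ∀ t, σ t ∈ Δf X) (N : ℕ) : ∑ t ∈ Finset.range N, θ t * E (σ t) r ≤ payoff r θ σ :=
  (pay_summable hr01 h hσ).sum_le_tsum _ (fun t _ => mul_nonneg (h.1 t) (E01 hr01 (hσ t)).1)

lemma pay_le (hr01 : ∀ x, r x ∈ Icc (0:ℝ) 1) {θ : ℕ → ℝ} (h : IsEval θ) {σ : ℕ → X →₀ ℝ}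
    (hσ : ∀ t, σ t ∈ Δf X) (N : ℕ) :
    payoff r θ σ ≤ ∑ t ∈ Finset.range N, θ t * E (σ t) r + (1 - ∑ t ∈ Finset.range N, θ t) := by
  have h1 := (pay_summable hr01 h hσ).sum_add_tsum_nat_add N
  have h2 := h.summable.sum_add_tsum_nat_add N
  rw [h.2] at h2
  have h3 : ∑' t, θ (t + N) * E (σ (t + N)) r ≤ ∑' t, θ (t + N) :=
    Summable.tsum_le_tsum (fun t => mul_le_of_le_one_right (h.1 _) (E01 hr01 (hσ _)).2)
      ((summable_nat_add_iff N).2 (pay_summable hr01 h hσ)) ((summable_nat_add_iff N).2 h.summable)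
  rw [pay_eq]
  linarith

lemma pay01 (hr01 : ∀ x, r x ∈ Icc (0:ℝ) 1) {θ : ℕ → ℝ} (h : IsEval θ) {σ : ℕ → X →₀ ℝ}
    (hσ : ∀ t, σ t ∈ Δf X) : payoff r θ σ ∈ Icc (0:ℝ) 1 := by
  have h1 := pay_ge hr01 h hσ 0
  have h2 := pay_le hr01 h hσ 0
  simp at h1 h2
  exact ⟨h1, h2⟩

lemma play_mem (hFΔ : ∀ x, F x ⊆ Δf X) {x : X} {σ : ℕ → X →₀ ℝ}
    (hσ : IsPlay F x σ) (t : ℕ) : σ t ∈ Δf X := by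
  induction t with
  | zero => exact conv_sub hFΔ x hσ.1
  | succ n ih => exact Fhat_sub hFΔ ih (hσ.2 n)

lemma val_bdd (hFΔ : ∀ x, F x ⊆ Δf X) (hr01 : ∀ x, r x ∈ Icc (0:ℝ) 1) {θ : ℕ → ℝ} (h : IsEval θ)
    (x : X) : BddAbove {c : ℝ | ∃ σ, IsPlay F x σ ∧ c = payoff r θ σ} := by
  refine ⟨1, ?_⟩
  rintro _ ⟨σ, hσ, rfl⟩
  exact (pay01 hr01 h (play_mem hFΔ hσ)).2

lemma exists_play (hFne : ∀ x, (F x).Nonempty) (x : X) : ∃ σ, IsPlay F x σ := by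
  obtain ⟨s, hs, hs0⟩ := exists_chain hFne (Finsupp.single x 1)
  exact ⟨_, chain_play hFne hs hs0⟩

lemma pay_le_val (hFΔ : ∀ x, F x ⊆ Δf X) (hr01 : ∀ x, r x ∈ Icc (0:ℝ) 1) {θ : ℕ → ℝ} (h : IsEval θ)
    {x : X} {σ : ℕ → X →₀ ℝ} (hσ : IsPlay F x σ) : payoff r θ σ ≤ value F r θ x :=
  le_csSup (val_bdd hFΔ hr01 h x) ⟨σ, hσ, rfl⟩

lemma val_le (hFne : ∀ x, (F x).Nonempty) {θ : ℕ → ℝ} {x : X} {c : ℝ}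
    (h : ∀ σ, IsPlay F x σ → payoff r θ σ ≤ c) : value F r θ x ≤ c := by
  obtain ⟨σ, hσ⟩ := exists_play hFne x
  refine csSup_le ⟨_, σ, hσ, rfl⟩ ?_
  rintro _ ⟨σ, hσ, rfl⟩
  exact h σ hσ

lemma exists_near_val (hFne : ∀ x, (F x).Nonempty) (θ : ℕ → ℝ) (x : X) {η : ℝ} (hη : 0 < η) :
    ∃ σ, IsPlay F x σ ∧ value F r θ x - η ≤ payoff r θ σ := by
  obtain ⟨σ, hσ⟩ := exists_play hFne x
  obtain ⟨_, ⟨σ', h', rfl⟩, h⟩ := exists_lt_of_lt_csSup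
    (s := {c : ℝ | ∃ σ, IsPlay F x σ ∧ c = payoff r θ σ}) ⟨_, σ, hσ, rfl⟩
    (show value F r θ x - η < sSup _ by unfold value; linarith)
  exact ⟨σ', h', h.le⟩

lemma val01 (hFne : ∀ x, (F x).Nonempty) (hFΔ : ∀ x, F x ⊆ Δf X) (hr01 : ∀ x, r x ∈ Icc (0:ℝ) 1)
    {θ : ℕ → ℝ} (h : IsEval θ) (x : X) : value F r θ x ∈ Icc (0:ℝ) 1 := by
  obtain ⟨σ, hσ⟩ := exists_play hFne x
  exact ⟨(pay01 hr01 h (play_mem hFΔ hσ)).1.trans (pay_le_val hFΔ hr01 h hσ),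
    val_le hFne fun σ hσ => (pay01 hr01 h (play_mem hFΔ hσ)).2⟩

lemma r_bd (hr01 : ∀ x, r x ∈ Icc (0:ℝ) 1) : Bd r :=
  ⟨1, fun x => abs_le.2 ⟨by linarith [(hr01 x).1], (hr01 x).2⟩⟩

lemma W_le_val (hFne : ∀ x, (F x).Nonempty) (hFΔ : ∀ x, F x ⊆ Δf X) (hr01 : ∀ x, r x ∈ Icc (0:ℝ) 1)
    {θ : ℕ → ℝ} (h : IsEval θ) (N : ℕ) (x : X) : W F r N θ x ≤ value F r θ x := by
  refine le_of_forall_pos_le_add fun η hη => ?_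
  obtain ⟨s, hs, hs0, h1⟩ := W_lower hFne hFΔ r (η := η / (N + 1)) (by positivity) N θ
    (Finsupp.single x 1) (single_mem x)
  have hp := chain_play hFne hs hs0
  have h2 := pay_ge hr01 h (play_mem hFΔ hp) N
  have h3 := pay_le_val hFΔ hr01 h hp
  rw [E_single, one_mul] at h1
  have h4 : N * (η / (N + 1)) ≤ η := by
    rw [mul_div_assoc', div_le_iff₀ (by positivity)]; nlinarith
  linarith

lemma val_le_W (hFne : ∀ x, (F x).Nonempty) (hFΔ : ∀ x, F x ⊆ Δf X) (hr01 : ∀ x, r x ∈ Icc (0:ℝ) 1)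
    {θ : ℕ → ℝ} (h : IsEval θ) (N : ℕ) (x : X) :
    value F r θ x ≤ W F r N θ x + (1 - ∑ t ∈ Finset.range N, θ t) := by
  refine val_le hFne fun σ hσ => ?_
  have h1 := pay_le hr01 h (play_mem hFΔ hσ) N
  have h2 := W_upper hFne hFΔ (r_bd hr01) N θ _ (play_cons hFne hσ) (single_mem x)
  have h3 : E (cons (Finsupp.single x 1) σ 0) (W F r N θ) = W F r N θ x := by
    simp [cons, E_single]
  rw [h3] at h2
  simp only [cons] at h2
  linarith

lemma W_tendsto (hFne : ∀ x, (F x).Nonempty) (hFΔ : ∀ x, F x ⊆ Δf X)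
    (hr01 : ∀ x, r x ∈ Icc (0:ℝ) 1) {θ : ℕ → ℝ} (h : IsEval θ) (x : X) :
    Filter.Tendsto (fun N => W F r N θ x) Filter.atTop (nhds (value F r θ x)) := by
  have h1 : Filter.Tendsto (fun N => value F r θ x - (1 - ∑ t ∈ Finset.range N, θ t)) Filter.atTop
      (nhds (value F r θ x - (1 - 1))) :=
    tendsto_const_nhds.sub (tendsto_const_nhds.sub h.hasSum.tendsto_sum_nat)
  rw [sub_self, sub_zero] at h1
  refine tendsto_of_tendsto_of_tendsto_of_le_of_le h1 tendsto_const_nhds (fun N => ?_)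
    (fun N => W_le_val hFne hFΔ hr01 h N x)
  have := val_le_W hFne hFΔ hr01 h N x
  dsimp only; linarith

lemma val_mod (hFne : ∀ x, (F x).Nonempty) (hFΔ : ∀ x, F x ⊆ Δf X) (hexp : NE F)
    (hr01 : ∀ x, r x ∈ Icc (0:ℝ) 1) {L e : ℝ} (hL : 0 ≤ L) (he : 0 ≤ e) (hr : AL L e r)
    {θ : ℕ → ℝ} (h : IsEval θ) (x y : X) :
    |value F r θ x - value F r θ y| ≤ L * dist x y + 2 * e := by
  refine le_of_tendsto' ((W_tendsto hFne hFΔ hr01 h x).sub (W_tendsto hFne hFΔ hr01 h y)).abs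
    fun N => ?_
  refine ((W_AL hFne hFΔ hexp hL hr N θ h.1).mod x y).trans ?_
  have h1 := h.sum_le N
  have h0 := Finset.sum_nonneg (s := Finset.range N) (fun t _ => h.1 t)
  have := mul_le_of_le_one_left hL h1
  have := mul_le_of_le_one_left he h1
  gcongr

lemma val_exc (hFne : ∀ x, (F x).Nonempty) (hFΔ : ∀ x, F x ⊆ Δf X)
    (hr01 : ∀ x, r x ∈ Icc (0:ℝ) 1)
    {θ : ℕ → ℝ} (h : IsEval θ) (y : X) {u : X →₀ ℝ} (hu : u ∈ F y) :
    E u (value F r θ) - impatience θ ≤ value F r θ y := by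
  have h1 : Filter.Tendsto (fun N => E u (W F r N θ)) Filter.atTop (nhds (E u (value F r θ))) := by
    unfold E Finsupp.sum
    exact tendsto_finsetSum _ fun x _ => (W_tendsto hFne hFΔ hr01 h x).const_mul _
  refine le_of_tendsto' (h1.sub_const _) fun N => ?_
  refine le_trans ?_ (W_le_val hFne hFΔ hr01 h (N + 1) y)
  have h2 := le_T hFΔ (W_bd hFne hFΔ (r_bd hr01) N θ).2 hu
  refine le_trans ?_ h2
  rw [sub_le_iff_le_add, ← sub_le_iff_le_add', ← E_fsub]
  refine E_le (hFΔ y hu) fun x => ?_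
  have h3 := abs_le.1 (W_theta hFne hFΔ hr01 N (fun t => θ (t + 1)) θ x)
  have h4 := h.imp_sum_le N
  have := mul_nonneg (h.1 0) (hr01 x).1
  linarith

end pay
end val
end Stmt15


namespace Stmt15
set_option linter.unusedSectionVars false

section occ
variable {X : Type*} [MetricSpace X] [CompactSpace X] {F : X → Set (X →₀ ℝ)} {r : X → ℝ}

lemma abel_sum (θ a : ℕ → ℝ) (N : ℕ) :
    ∑ t ∈ Finset.range N, θ t * (a t - a (t + 1)) =
      θ 0 * a 0 - θ N * a N + ∑ t ∈ Finset.range N, (θ (t + 1) - θ t) * a (t + 1) := by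
  induction N with
  | zero => simp
  | succ n ih => rw [Finset.sum_range_succ, Finset.sum_range_succ, ih]; ring

lemma abel_bound {θ : ℕ → ℝ} (h : IsEval θ) {a : ℕ → ℝ} {B : ℝ} (ha : ∀ t, |a t| ≤ B) (N : ℕ) :
    |∑ t ∈ Finset.range N, θ t * (a t - a (t + 1))| ≤ 3 * B * impatience θ := by
  have hB : 0 ≤ B := (abs_nonneg _).trans (ha 0)
  rw [abel_sum]
  have h1 : ∀ t, |θ t * a t| ≤ B * impatience θ := fun t => by
    rw [abs_mul, abs_of_nonneg (h.1 t), mul_comm]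
    exact mul_le_mul (ha t) (h.le_imp t) (h.1 t) hB
  have h2 : |∑ t ∈ Finset.range N, (θ (t + 1) - θ t) * a (t + 1)| ≤ B * impatience θ := by
    refine (Finset.abs_sum_le_sum_abs _ _).trans ?_
    calc _ ≤ ∑ t ∈ Finset.range N, B * |θ (t + 1) - θ t| := by
          refine Finset.sum_le_sum fun t _ => ?_
          rw [abs_mul, mul_comm]
          exact mul_le_mul_of_nonneg_right (ha _) (abs_nonneg _)
      _ = B * ∑ t ∈ Finset.range N, |θ (t + 1) - θ t| := by rw [Finset.mul_sum]
      _ ≤ _ := mul_le_mul_of_nonneg_left (h.imp_sum_le N) hB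
  have h3 := abs_le.1 (h1 0)
  have h4 := abs_le.1 (h1 N)
  have h5 := abs_le.1 h2
  rw [abs_le]; constructor <;> linarith

lemma occ (hFne : ∀ x, (F x).Nonempty) (hFΔ : ∀ x, F x ⊆ Δf X) (hr01 : ∀ x, r x ∈ Icc (0:ℝ) 1)
    {θ : ℕ → ℝ} (h : IsEval θ) {x : X} {σ : ℕ → X →₀ ℝ} (hσ : IsPlay F x σ) {δ : ℝ} (hδ : 0 < δ) :
    ∃ m m' : X →₀ ℝ, m ∈ Δf X ∧ m' ∈ Fhat F m ∧ payoff r θ σ - δ ≤ E m r ∧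
      (∀ g : X → ℝ, Bd g → (∀ y, ∀ u ∈ F y, E u g ≤ g y) → E m g ≤ g x) ∧
      ∀ (f : X → ℝ) (B : ℝ), (∀ y, |f y| ≤ B) → |E m f - E m' f| ≤ 6 * B * impatience θ := by
  have hm := play_mem hFΔ hσ
  have h1 := h.hasSum.tendsto_sum_nat
  obtain ⟨N, hN⟩ : ∃ N, 1 - min δ (1/2) < ∑ t ∈ Finset.range N, θ t :=
    (h1.eventually (lt_mem_nhds (show 1 - min δ (1/2) < 1 by
      have : 0 < min δ (1/2) := lt_min hδ (by norm_num)
      linarith))).exists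
  set S := ∑ t ∈ Finset.range N, θ t with hS
  have hSδ : 1 - δ < S := by have := min_le_left δ (1/2); linarith
  have hS2 : 1/2 < S := by have := min_le_right δ (1/2); linarith
  have hS1 : S ≤ 1 := h.sum_le N
  have hS0 : 0 < S := by linarith
  have hE : ∀ (τ : ℕ → X →₀ ℝ) (f : X → ℝ), E (S⁻¹ • ∑ t ∈ Finset.range N, θ t • τ t) f =
      S⁻¹ * ∑ t ∈ Finset.range N, θ t * E (τ t) f := by
    intro τ f
    rw [E_smul, E_sum]; simp only [E_smul]
  refine ⟨S⁻¹ • ∑ t ∈ Finset.range N, θ t • σ t, S⁻¹ • ∑ t ∈ Finset.range N, θ t • σ (t + 1),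
    ?_, ?_, ?_, ?_, ?_⟩
  · rw [mem_Δf_iff]
    refine ⟨fun y => ?_, ?_⟩
    · rw [Finsupp.smul_apply, Finsupp.finsetSum_apply]
      refine mul_nonneg (inv_nonneg.2 hS0.le) (Finset.sum_nonneg fun t _ => ?_)
      exact mul_nonneg (h.1 t) ((hm t).1 y)
    · rw [hE]
      simp only [E_one (hm _), mul_one]
      exact inv_mul_cancel₀ hS0.ne'
  · exact Fhat_smul _ (Fhat_sum hFne N θ h.1 σ (fun t => σ (t + 1)) (fun t => (hm t).1) hσ.2)
  · rw [hE]
    have h2 := pay_le hr01 h hm N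
    have h3 : 0 ≤ ∑ t ∈ Finset.range N, θ t * E (σ t) r :=
      Finset.sum_nonneg fun t _ => mul_nonneg (h.1 t) (E01 hr01 (hm t)).1
    have h4 := mul_le_mul_of_nonneg_right (one_le_inv₀ hS0 |>.2 hS1) h3
    linarith
  · intro g hg hexc
    rw [hE, inv_mul_le_iff₀ hS0, hS, Finset.sum_mul]
    have hT : ∀ y, T F g y ≤ g y := fun y => T_le hFne (hexc y)
    suffices hall : ∀ t, E (σ t) g ≤ g x from
      Finset.sum_le_sum fun t _ => mul_le_mul_of_nonneg_left (hall t) (h.1 t)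
    intro t
    induction t with
    | zero => exact (conv_le_T hFΔ hg hσ.1).trans (hT x)
    | succ n ih =>
      exact (Fhat_le_T hFΔ hg (hm n).1 (hσ.2 n)).trans ((E_mono (hm n).1 hT).trans ih)
  · intro f B hB
    rw [hE, hE, ← mul_sub, ← Finset.sum_sub_distrib]
    simp only [← mul_sub]
    have h2 := abel_bound h (a := fun t => E (σ t) f) (fun t => E_abs_le (hm t) hB) N
    rw [abs_mul, abs_of_pos (inv_pos.2 hS0), inv_mul_le_iff₀ hS0]
    have h3 : 0 ≤ 3 * B * impatience θ := (abs_nonneg _).trans h2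
    nlinarith
end occ

section meas
variable {X : Type*} [MetricSpace X] [CompactSpace X] [MeasurableSpace X] [BorelSpace X]
  {F : X → Set (X →₀ ℝ)} {r : X → ℝ}

lemma toMeas_prob {u : X →₀ ℝ} (hu : u ∈ Δf X) : IsProbabilityMeasure (toMeas u) := by
  constructor
  unfold toMeas Finsupp.sum
  rw [Measure.finsetSum_apply]
  simp only [Measure.smul_apply, measure_univ, smul_eq_mul, mul_one]
  rw [← ENNReal.ofReal_sum_of_nonneg (fun x _ => hu.1 x)]
  have : ∑ x ∈ u.support, u x = 1 := hu.2
  rw [this, ENNReal.ofReal_one]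

lemma toMeas_integral {u : X →₀ ℝ} (hu : ∀ x, 0 ≤ u x) {f : X → ℝ} (hf : Continuous f) :
    ∫ x, f x ∂(toMeas u) = E u f := by
  unfold toMeas Finsupp.sum E
  rw [integral_finsetSum_measure]
  · simp only [integral_smul_measure, integral_dirac, smul_eq_mul]
    exact Finset.sum_congr rfl fun x _ => by rw [ENNReal.toReal_ofReal (hu x)]
  · intro x _
    refine Integrable.smul_measure ?_ ENNReal.ofReal_ne_top
    exact (BoundedContinuousFunction.mkOfCompact ⟨f, hf⟩).integrable _

lemma cont_integrable {f : X → ℝ} (hf : Continuous f) (μ : Measure X) [IsFiniteMeasure μ] :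
    Integrable f μ := (BoundedContinuousFunction.mkOfCompact ⟨f, hf⟩).integrable μ

lemma toMeas_comb {u v : X →₀ ℝ} (hu : ∀ x, 0 ≤ u x) (hv : ∀ x, 0 ≤ v x) {a b : ℝ} (ha : 0 ≤ a)
    (hb : 0 ≤ b) : toMeas (a • u + b • v) =
      ENNReal.ofReal a • toMeas u + ENNReal.ofReal b • toMeas v := by
  classical
  unfold toMeas
  rw [Finsupp.sum_of_support_subset u (s := u.support ∪ v.support) (by simp) _ (by simp),
    Finsupp.sum_of_support_subset v (s := u.support ∪ v.support) (by simp) _ (by simp),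
    Finsupp.sum_of_support_subset (a • u + b • v) (s := u.support ∪ v.support)
      (Finsupp.support_add.trans (Finset.union_subset_union Finsupp.support_smul
        Finsupp.support_smul)) _ (by simp), Finset.smul_sum, Finset.smul_sum,
      ← Finset.sum_add_distrib]
  refine Finset.sum_congr rfl fun x _ => ?_
  rw [Finsupp.add_apply, Finsupp.smul_apply, Finsupp.smul_apply, smul_eq_mul, smul_eq_mul,
    ENNReal.ofReal_add (mul_nonneg ha (hu x)) (mul_nonneg hb (hv x)), ENNReal.ofReal_mul ha,
    ENNReal.ofReal_mul hb, add_smul, mul_smul, mul_smul]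

/-- probability measure of a finitely supported weight -/
noncomputable def pm (u : X →₀ ℝ) (hu : u ∈ Δf X) : ProbabilityMeasure X :=
  ⟨toMeas u, toMeas_prob hu⟩

/-- Dirac mass -/
noncomputable def dδ (x : X) : ProbabilityMeasure X := ⟨Measure.dirac x, inferInstance⟩

lemma affine_E {w : ProbabilityMeasure X → ℝ} (hw : IsAffine w) {u : X →₀ ℝ} (hu : u ∈ Δf X) :
    w (pm u hu) = E u (fun x => w (dδ x)) := by
  let S : Set (X →₀ ℝ) := {u | ∃ hu : u ∈ Δf X, w (pm u hu) = E u (fun x => w (dδ x))}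
  have hS : Convex ℝ S := by
    rintro u ⟨hu, h1⟩ v ⟨hv, h2⟩ a b ha hb hab
    refine ⟨convex_Δf hu hv ha hb hab, ?_⟩
    have hb' : b = 1 - a := by linarith
    rw [hw (pm u hu) (pm v hv) _ a ⟨ha, by linarith⟩ ?_, h1, h2, E_add, E_smul, E_smul, hb']
    rw [← hb']
    exact toMeas_comb hu.1 hv.1 ha hb
  have h1 : ∀ x, Finsupp.single x (1:ℝ) ∈ S := by
    intro x
    refine ⟨single_mem x, ?_⟩
    rw [E_single, one_mul]
    congr 1
    apply Subtype.ext
    change toMeas (Finsupp.single x (1:ℝ)) = Measure.dirac x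
    unfold toMeas
    rw [Finsupp.sum_single_index (by simp)]
    simp
  have h2 : u = ∑ x ∈ u.support, u x • Finsupp.single x (1:ℝ) := by
    conv_lhs => rw [← Finsupp.sum_single u]
    simp [Finsupp.sum]
  have h3 : u ∈ S := by
    rw [h2]
    exact hS.sum_mem (fun x _ => hu.1 x) hu.2 (fun x _ => h1 x)
  exact h3.2

lemma cont_int {f : X → ℝ} (hf : Continuous f) :
    Continuous (fun μ : ProbabilityMeasure X => ∫ x, f x ∂(μ : Measure X)) :=
  ProbabilityMeasure.continuous_integral_continuousMap (⟨f, hf⟩ : C(X, ℝ))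

lemma inv_T (hFne : ∀ x, (F x).Nonempty) (hFΔ : ∀ x, F x ⊆ Δf X) (hexp : NE F)
    {f : X → ℝ} (hf : Continuous f) {μ : ProbabilityMeasure X} (hμ : μ ∈ invariantSet F) :
    ∫ x, f x ∂(μ : Measure X) ≤ ∫ x, T F f x ∂(μ : Measure X) := by
  have hT := T_cont hFne hFΔ hexp hf
  have hcl : IsClosed {p : ProbabilityMeasure X × ProbabilityMeasure X |
      ∫ x, f x ∂(p.2 : Measure X) ≤ ∫ x, T F f x ∂(p.1 : Measure X)} :=
    isClosed_le ((cont_int hf).comp continuous_snd) ((cont_int hT).comp continuous_fst)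
  refine closure_minimal ?_ hcl hμ
  rintro p ⟨u, v, hu, hv, h1, h2⟩
  change ∫ x, f x ∂(p.2 : Measure X) ≤ ∫ x, T F f x ∂(p.1 : Measure X)
  rw [h1, h2, toMeas_integral hu.1 hT, toMeas_integral (Fhat_nonneg hFΔ hu.1 hv) hf]
  exact Fhat_le_T hFΔ (bd_of_cont hf) hu.1 hv

lemma W_cont (hFne : ∀ x, (F x).Nonempty) (hFΔ : ∀ x, F x ⊆ Δf X) (hexp : NE F)
    (hr : Continuous r) (N : ℕ) : ∀ θ, Continuous (W F r N θ) := by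
  induction N with
  | zero => exact fun θ => continuous_const
  | succ n ih =>
    exact fun θ => T_cont hFne hFΔ hexp ((continuous_const.mul hr).add (ih _))

lemma inv_W (hFne : ∀ x, (F x).Nonempty) (hFΔ : ∀ x, F x ⊆ Δf X) (hexp : NE F)
    (hr : Continuous r) {μ : ProbabilityMeasure X} (hμ : μ ∈ invariantSet F) (N : ℕ) : ∀ θ : ℕ → ℝ,
    (∑ t ∈ Finset.range N, θ t) * ∫ x, r x ∂(μ : Measure X) ≤ ∫ x, W F r N θ x ∂(μ : Measure X) := by
  induction N with
  | zero => intro θ; simp [W]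
  | succ n ih =>
    intro θ
    have hc := W_cont hFne hFΔ hexp hr n (fun t => θ (t + 1))
    have h1 := inv_T (f := fun x => θ 0 * r x + W F r n (fun t => θ (t+1)) x) hFne hFΔ hexp
      (by exact (continuous_const.mul hr).add hc) hμ
    rw [integral_add ((cont_integrable hr _).const_mul _) (cont_integrable hc _),
      integral_const_mul] at h1
    have h2 := ih (fun t => θ (t + 1))
    rw [Finset.sum_range_succ']
    simp only [W]
    linarith

lemma val_cont (hFne : ∀ x, (F x).Nonempty) (hFΔ : ∀ x, F x ⊆ Δf X) (hexp : NE F)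
    (hr : Continuous r) (hr01 : ∀ x, r x ∈ Icc (0:ℝ) 1) {ε : ℝ} (hε : 0 < ε) :
    ∃ δ > 0, ∀ θ, IsEval θ → ∀ x y, dist x y < δ → |value F r θ x - value F r θ y| < ε := by
  obtain ⟨L, hL, h⟩ := exists_AL hr (show 0 < ε / 4 by linarith)
  refine ⟨ε / (4 * (L + 1)), by positivity, fun θ hθ x y hxy => ?_⟩
  have := val_mod hFne hFΔ hexp hr01 hL (by linarith) h hθ x y
  have h2 : L * dist x y ≤ (L + 1) * (ε / (4 * (L + 1))) := by gcongr; linarith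
  have h3 : (L + 1) * (ε / (4 * (L + 1))) = ε / 4 := by field_simp
  linarith

lemma val_continuous (hFne : ∀ x, (F x).Nonempty) (hFΔ : ∀ x, F x ⊆ Δf X) (hexp : NE F)
    (hr : Continuous r) (hr01 : ∀ x, r x ∈ Icc (0:ℝ) 1) {θ : ℕ → ℝ} (hθ : IsEval θ) :
    Continuous (value F r θ) := by
  rw [Metric.continuous_iff]
  intro y ε hε
  obtain ⟨δ, hδ, h⟩ := val_cont hFne hFΔ hexp hr hr01 hε
  exact ⟨δ, hδ, fun x hx => h θ hθ x y hx⟩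

lemma inv_val (hFne : ∀ x, (F x).Nonempty) (hFΔ : ∀ x, F x ⊆ Δf X) (hexp : NE F)
    (hr : Continuous r) (hr01 : ∀ x, r x ∈ Icc (0:ℝ) 1) {μ : ProbabilityMeasure X}
    (hμ : μ ∈ invariantSet F) {θ : ℕ → ℝ} (hθ : IsEval θ) :
    ∫ x, r x ∂(μ : Measure X) ≤ ∫ x, value F r θ x ∂(μ : Measure X) := by
  have h1 := hθ.hasSum.tendsto_sum_nat.mul_const (∫ x, r x ∂(μ : Measure X))
  rw [one_mul] at h1
  refine le_of_tendsto' h1 fun N => (inv_W hFne hFΔ hexp hr hμ N θ).trans ?_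
  exact integral_mono (cont_integrable (W_cont hFne hFΔ hexp hr N θ) _)
    (cont_integrable (val_continuous hFne hFΔ hexp hr hr01 hθ) _)
    (fun x => W_le_val hFne hFΔ hr01 hθ N x)

/-- admissible functions -/
def Adm (F : X → Set (X →₀ ℝ)) (r : X → ℝ) (w : ProbabilityMeasure X → ℝ) : Prop :=
  Continuous w ∧ (∀ μ, w μ ∈ Icc (0:ℝ) 1) ∧ IsAffine w ∧
    (∀ y : X, ∀ u ∈ F y, ∀ μ : ProbabilityMeasure X, (μ : Measure X) = toMeas u →
            w ⟨Measure.dirac y, inferInstance⟩ ≥ w μ) ∧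
    (∀ μ ∈ invariantSet F, w μ ≥ ∫ y, r y ∂(μ : Measure X))

lemma upper (hFne : ∀ x, (F x).Nonempty) (hFΔ : ∀ x, F x ⊆ Δf X)
    (hr : Continuous r) (hr01 : ∀ x, r x ∈ Icc (0:ℝ) 1) {w : ProbabilityMeasure X → ℝ}
    (hw : Adm F r w) {ε : ℝ} (hε : 0 < ε) : ∃ α > 0, ∀ θ, IsEval θ → impatience θ ≤ α →
      ∀ x, value F r θ x ≤ w (dδ x) + ε := by
  by_contra hcon
  push Not at hcon
  obtain ⟨hwc, hw01, hwa, hwe, hwR⟩ := hw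
  have hg : Bd (fun x => w (dδ x)) :=
    ⟨1, fun x => abs_le.2 ⟨by linarith [(hw01 (dδ x)).1], (hw01 _).2⟩⟩
  have hgexc : ∀ y, ∀ u ∈ F y, E u (fun x => w (dδ x)) ≤ w (dδ y) := fun y u hu => by
    rw [← affine_E hwa (hFΔ y hu)]
    exact hwe y u hu _ rfl
  have hseq : ∀ n : ℕ, ∃ m m' : X →₀ ℝ, m ∈ Δf X ∧ m' ∈ Fhat F m ∧
      E m (fun x => w (dδ x)) + ε / 2 ≤ E m r ∧
      ∀ (f : X → ℝ) (B : ℝ), (∀ y, |f y| ≤ B) → |E m f - E m' f| ≤ 6 * B * (1 / ((n:ℝ) + 1)) := by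
    intro n
    obtain ⟨θ, hθ, hI, x, hx⟩ := hcon (1 / ((n:ℝ) + 1)) (by positivity)
    obtain ⟨σ, hσ, hp⟩ : ∃ σ, IsPlay F x σ ∧ w (dδ x) + ε < payoff r θ σ := by
      by_contra hc
      push Not at hc
      exact absurd (val_le hFne hc) (not_le.2 hx)
    obtain ⟨m, m', hm, hm', h1, h2, h3⟩ := occ hFne hFΔ hr01 hθ hσ (half_pos hε)
    refine ⟨m, m', hm, hm', ?_, fun f B hB => ?_⟩
    · have := h2 _ hg hgexc
      linarith
    · refine (h3 f B hB).trans ?_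
      have : 0 ≤ B := (abs_nonneg _).trans (hB x)
      gcongr
  choose m m' hm hm' h1 h2 using hseq
  let U : Ultrafilter ℕ := Ultrafilter.of Filter.atTop
  have hU : (U : Filter ℕ) ≤ Filter.atTop := Ultrafilter.of_le _
  obtain ⟨μ, -, hμ⟩ := isCompact_univ.ultrafilter_le_nhds (U.map fun n => pm (m n) (hm n)) (by simp)
  have hμ' : Filter.Tendsto (fun n => pm (m n) (hm n)) U (nhds μ) := hμ
  have hintg : ∀ f : X → ℝ, Continuous f →
      Filter.Tendsto (fun n => E (m n) f) U (nhds (∫ x, f x ∂(μ : Measure X))) := by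
    intro f hf
    refine (((cont_int hf).tendsto μ).comp hμ').congr fun n => ?_
    exact toMeas_integral (hm n).1 hf
  have hΔ' : ∀ n, m' n ∈ Δf X := fun n => Fhat_sub hFΔ (hm n) (hm' n)
  have hμ2 : Filter.Tendsto (fun n => pm (m' n) (hΔ' n)) U (nhds μ) := by
    rw [ProbabilityMeasure.tendsto_iff_forall_integral_tendsto]
    intro f
    have hf : Continuous f := f.continuous
    obtain ⟨B, hB⟩ := bd_of_cont hf
    have e1 : Filter.Tendsto (fun n : ℕ => 6 * B * (1 / ((n:ℝ) + 1))) U (nhds (6 * B * 0)) :=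
      (tendsto_one_div_add_atTop_nhds_zero_nat.const_mul _).mono_left hU
    rw [mul_zero] at e1
    have e2 : Filter.Tendsto (fun n => E (m n) f - E (m' n) f) U (nhds 0) :=
      squeeze_zero_norm (fun n => by rw [Real.norm_eq_abs]; exact h2 n f B hB) e1
    have e3 := (hintg f hf).sub e2
    rw [sub_zero] at e3
    refine e3.congr fun n => ?_
    rw [sub_sub_cancel]
    exact (toMeas_integral (hΔ' n).1 hf).symm
  have hR : μ ∈ invariantSet F := by
    refine mem_closure_of_tendsto (hμ'.prodMk_nhds hμ2) (Filter.Eventually.of_forall fun n => ?_)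
    exact ⟨m n, m' n, hm n, hm' n, rfl, rfl⟩
  have h3 : w μ + ε / 2 ≤ ∫ x, r x ∂(μ : Measure X) := by
    refine le_of_tendsto_of_tendsto' (((hwc.tendsto μ).comp hμ').add_const (ε / 2)) (hintg r hr)
      fun n => ?_
    simp only [Function.comp]
    rw [affine_E hwa]
    exact h1 n
  have := hwR μ hR
  linarith

/-- integration against a continuous function is admissible under suitable conditions -/
lemma adm_int (hFΔ : ∀ x, F x ⊆ Δf X) {g : X → ℝ} (hg : Continuous g)
    (hg01 : ∀ x, g x ∈ Icc (0:ℝ) 1) (hexc : ∀ y, ∀ u ∈ F y, E u g ≤ g y)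
    (hR : ∀ μ ∈ invariantSet F, ∫ x, r x ∂(μ : Measure X) ≤ ∫ x, g x ∂(μ : Measure X)) :
    Adm F r (fun μ => ∫ x, g x ∂(μ : Measure X)) := by
  refine ⟨cont_int hg, fun μ => ⟨integral_nonneg fun x => (hg01 x).1, ?_⟩, ?_, ?_, hR⟩
  · have := integral_mono (cont_integrable hg (μ : Measure X))
      (integrable_const (1:ℝ)) (fun x => (hg01 x).2)
    simpa using this
  · intro u v m a ha hm
    dsimp only
    rw [hm, integral_add_measure ((cont_integrable hg _).smul_measure ENNReal.ofReal_ne_top)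
      ((cont_integrable hg _).smul_measure ENNReal.ofReal_ne_top), integral_smul_measure,
      integral_smul_measure, ENNReal.toReal_ofReal ha.1, ENNReal.toReal_ofReal (by linarith [ha.2])]
    rfl
  · intro y u hu μ hμ
    have h1 : ∫ x, g x ∂(μ : Measure X) = E u g := by rw [hμ]; exact toMeas_integral (hFΔ y hu).1 hg
    have h2 : ∫ x, g x ∂(Measure.dirac y) = g y := integral_dirac _ _
    change ∫ x, g x ∂(Measure.dirac y) ≥ ∫ x, g x ∂(μ : Measure X)
    rw [h1, h2]
    exact hexc y u hu

/-- the limit value -/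
noncomputable def vs (F : X → Set (X →₀ ℝ)) (r : X → ℝ) (x : X) : ℝ :=
  sInf {c : ℝ | ∃ w : ProbabilityMeasure X → ℝ, Continuous w ∧
          (∀ μ, w μ ∈ Icc (0:ℝ) 1) ∧ Stmt15.IsAffine w ∧
          (∀ y : X, ∀ u ∈ F y, ∀ μ : ProbabilityMeasure X,
            (μ : Measure X) = Stmt15.toMeas u →
            w ⟨Measure.dirac y, inferInstance⟩ ≥ w μ) ∧
          (∀ μ ∈ Stmt15.invariantSet F, w μ ≥ ∫ y, r y ∂(μ : Measure X)) ∧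
          c = w ⟨Measure.dirac x, inferInstance⟩}

lemma vs_le {w : ProbabilityMeasure X → ℝ} (hw : Adm F r w) (x : X) : vs F r x ≤ w (dδ x) := by
  refine csInf_le ⟨0, ?_⟩ ⟨w, hw.1, hw.2.1, hw.2.2.1, hw.2.2.2.1, hw.2.2.2.2, rfl⟩
  rintro _ ⟨w, h1, h2, h3, h4, h5, rfl⟩
  exact (h2 _).1

lemma le_vs {w0 : ProbabilityMeasure X → ℝ} (hw0 : Adm F r w0) {x : X} {c : ℝ}
    (h : ∀ w, Adm F r w → c ≤ w (dδ x)) : c ≤ vs F r x := by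
  refine le_csInf ⟨_, w0, hw0.1, hw0.2.1, hw0.2.2.1, hw0.2.2.2.1, hw0.2.2.2.2, rfl⟩ ?_
  rintro _ ⟨w, h1, h2, h3, h4, h5, rfl⟩
  exact h w ⟨h1, h2, h3, h4, h5⟩

theorem limit_value (hFne : ∀ x, (F x).Nonempty) (hFΔ : ∀ x, F x ⊆ Δf X) (hexp : NE F)
    (hr : Continuous r) (hr01 : ∀ x, r x ∈ Icc (0:ℝ) 1) : 
    ∀ ε > (0:ℝ), ∃ α > (0:ℝ), ∀ θ : ℕ → ℝ, IsEval θ → impatience θ ≤ α →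
        ∀ x : X, |value F r θ x - vs F r x| ≤ ε := by
  intro ε hε
  by_contra hcon
  push Not at hcon
  have hseq := fun n : ℕ => hcon (1 / ((n:ℝ) + 1)) (by positivity)
  choose θ hθ hI x hx using hseq
  let f : ℕ → BoundedContinuousFunction X ℝ := fun n =>
    BoundedContinuousFunction.mkOfCompact ⟨value F r (θ n), val_continuous hFne hFΔ hexp hr hr01 (hθ n)⟩
  have hfe : ∀ n x, f n x = value F r (θ n) x := fun n x => rfl
  have hcomp : IsCompact (closure (range f)) := by
    refine BoundedContinuousFunction.arzela_ascoli (Icc (0:ℝ) 1) isCompact_Icc _ ?_ ?_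
    · rintro _ x ⟨n, rfl⟩
      exact val01 hFne hFΔ hr01 (hθ n) x
    · intro x0
      rw [Metric.equicontinuousAt_iff]
      intro e he
      obtain ⟨δ, hδ, h⟩ := val_cont hFne hFΔ hexp hr hr01 he
      refine ⟨δ, hδ, ?_⟩
      rintro x hx ⟨_, n, rfl⟩
      rw [Real.dist_eq]
      exact h _ (hθ n) x0 x (by rwa [dist_comm])
  obtain ⟨g, -, φ, hφ, hlim⟩ := hcomp.tendsto_subseq (fun n => subset_closure (mem_range_self n))
  have hIlim : Filter.Tendsto (fun n => impatience (θ (φ n))) Filter.atTop (nhds 0) := by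
    refine squeeze_zero (fun n => IsEval.imp_nonneg _) (fun n => hI _) ?_
    exact tendsto_one_div_add_atTop_nhds_zero_nat.comp hφ.tendsto_atTop
  have hpt : ∀ x, Filter.Tendsto (fun n => value F r (θ (φ n)) x) Filter.atTop (nhds (g x)) := by
    intro x
    rw [tendsto_iff_dist_tendsto_zero] at hlim ⊢
    exact squeeze_zero (fun n => dist_nonneg)
      (fun n => BoundedContinuousFunction.dist_coe_le_dist (f := f (φ n)) (g := g) x) hlim
  have hgadm : Adm F r (fun μ => ∫ x, g x ∂(μ : Measure X)) := by
    refine adm_int hFΔ g.continuous (fun x => ?_) (fun y u hu => ?_) (fun μ hμ => ?_)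
    · exact isClosed_Icc.mem_of_tendsto (hpt x)
        (Filter.Eventually.of_forall fun n => val01 hFne hFΔ hr01 (hθ _) x)
    · have h1 : Filter.Tendsto (fun n => E u (value F r (θ (φ n)))) Filter.atTop (nhds (E u g)) := by
        unfold E Finsupp.sum
        exact tendsto_finsetSum _ fun x _ => (hpt x).const_mul _
      have h2 := h1.sub hIlim
      rw [sub_zero] at h2
      exact le_of_tendsto_of_tendsto' h2 (hpt y) fun n => val_exc hFne hFΔ hr01 (hθ _) y hu
    · refine le_of_forall_pos_le_add fun e he => ?_
      obtain ⟨n, hn⟩ := (Metric.tendsto_nhds.1 hlim e he).exists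
      have h1 := inv_val hFne hFΔ hexp hr hr01 hμ (hθ (φ n))
      have h2 : ∫ x, value F r (θ (φ n)) x ∂(μ : Measure X) ≤ ∫ x, (g x + e) ∂(μ : Measure X) := by
        refine integral_mono (cont_integrable (val_continuous hFne hFΔ hexp hr hr01 (hθ _)) _)
          (cont_integrable (g.continuous.add continuous_const) _) fun x => ?_
        have h3 := (BoundedContinuousFunction.dist_coe_le_dist (f := f (φ n)) (g := g) x).trans hn.le
        rw [Real.dist_eq, hfe] at h3
        have := (abs_le.1 h3).2
        dsimp only; linarith
      rw [integral_add (cont_integrable g.continuous _) (integrable_const _)] at h2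
      simp at h2
      linarith
  have hgd : ∀ x, ∫ y, g y ∂((dδ x : ProbabilityMeasure X) : Measure X) = g x :=
    fun x => integral_dirac _ _
  have hgv : ∀ x, vs F r x = g x := by
    intro x
    apply le_antisymm
    · have := vs_le hgadm x
      rwa [hgd] at this
    · refine le_vs hgadm fun w hw => ?_
      refine le_of_forall_pos_le_add fun e he => ?_
      obtain ⟨α, hα, h⟩ := upper hFne hFΔ hr hr01 hw he
      refine le_of_tendsto (hpt x) ?_
      filter_upwards [hIlim.eventually (ge_mem_nhds hα)] with n hn
      exact h _ (hθ _) hn x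
  obtain ⟨n, hn⟩ := (Metric.tendsto_nhds.1 hlim ε hε).exists
  have h3 := (BoundedContinuousFunction.dist_coe_le_dist (f := f (φ n)) (g := g) (x (φ n))).trans hn.le
  rw [Real.dist_eq, hfe, ← hgv] at h3
  exact absurd h3 (not_le.2 (hx _))

end meas
end Stmt15


namespace Stmt15
set_option linter.unusedSectionVars false

lemma minimax {ι : Type*} [Fintype ι] [Nonempty ι] {K : Set (ι → ℝ)} (hK : Convex ℝ K) {c : ℝ}
    (h : ∀ l : ι → ℝ, (∀ i, 0 ≤ l i) → ∑ i, l i = 1 → ∃ y ∈ K, c ≤ ∑ i, l i * y i) {η : ℝ} (hη : 0 < η) :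
    ∃ y ∈ K, ∀ i, c - η ≤ y i := by
  classical
  by_contra hcon
  push Not at hcon
  have hOo : IsOpen {y : ι → ℝ | ∀ i, c - η < y i} := by
    have : {y : ι → ℝ | ∀ i, c - η < y i} = ⋂ i, {y | c - η < y i} := by ext; simp
    rw [this]
    exact isOpen_iInter_of_finite fun i => isOpen_lt continuous_const (continuous_apply i)
  have hOc : Convex ℝ {y : ι → ℝ | ∀ i, c - η < y i} := by
    intro y hy z hz a b ha hb hab i
    have h1 : c - η < y i := hy i
    have h2 : c - η < z i := hz i
    simp only [Pi.add_apply, Pi.smul_apply, smul_eq_mul]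
    have hb' : b = 1 - a := by linarith
    subst hb'
    rcases ha.eq_or_lt with h0 | h0
    · rw [← h0]; linarith
    · nlinarith
  have hd : Disjoint {y : ι → ℝ | ∀ i, c - η < y i} K := by
    rw [Set.disjoint_left]
    intro y hy hyK
    obtain ⟨i, hi⟩ := hcon y hyK
    exact absurd (hy i) (not_lt.2 hi.le)
  obtain ⟨f, u, hf1, hf2⟩ := geometric_hahn_banach_open hOc hOo hK hd
  have hfe : ∀ y, f y = ∑ i, y i * f (Pi.single i 1) := by
    intro y
    have := LinearMap.pi_apply_eq_sum_univ f.toLinearMap y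
    simp only [smul_eq_mul] at this
    refine this.trans (Finset.sum_congr rfl fun i _ => ?_)
    have h1 : (Pi.single i 1 : ι → ℝ) = fun j => if i = j then 1 else 0 := by
      ext j
      simp [Pi.single_apply, eq_comm]
    rw [h1]
    rfl
  have hcO : (fun _ => c) ∈ {y : ι → ℝ | ∀ i, c - η < y i} := fun i => by linarith
  have hw : ∀ i, f (Pi.single i 1) ≤ 0 := by
    intro i
    by_contra hi
    push Not at hi
    have h0 := hf1 _ hcO
    set M := (u - f (fun _ => c)) / f (Pi.single i 1) with hM
    have hMp : 0 ≤ M := div_nonneg (by linarith) hi.le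
    have h1 := hf1 ((fun _ => c) + M • Pi.single i 1) (by
      intro j
      have : 0 ≤ (Pi.single i 1 : ι → ℝ) j := by
        by_cases hj : j = i
        · subst hj; simp
        · simp [hj]
      have := mul_nonneg hMp this
      simp only [Pi.add_apply, Pi.smul_apply, smul_eq_mul]
      linarith)
    rw [map_add, map_smul, smul_eq_mul, hM, div_mul_cancel₀ _ hi.ne'] at h1
    linarith
  set S := ∑ i, -f (Pi.single i 1) with hS
  have hS0 : 0 ≤ S := Finset.sum_nonneg fun i _ => by linarith [hw i]
  have hc1 := hf1 _ hcO
  have hfc : f (fun _ => c) = - (S * c) := by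
    rw [hfe, hS, ← Finset.mul_sum, Finset.sum_neg_distrib]; ring
  rcases hS0.eq_or_lt with h0 | h0
  · obtain ⟨y, hyK, -⟩ := h (Pi.single (Classical.arbitrary ι) 1) (by
      intro j
      by_cases hj : j = Classical.arbitrary ι
      · subst hj; simp
      · simp [hj]) (by simp)
    have hz : ∀ i, f (Pi.single i 1) = 0 := by
      intro i
      have := (Finset.sum_eq_zero_iff_of_nonneg (fun i _ => by linarith [hw i])).1 h0.symm i
        (Finset.mem_univ i)
      linarith
    have h1 := hf2 y hyK
    rw [hfe] at h1
    simp only [hz, mul_zero, Finset.sum_const_zero] at h1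
    rw [hfc, ← h0] at hc1
    linarith
  · obtain ⟨y, hyK, hy⟩ := h (fun i => S⁻¹ * -f (Pi.single i 1))
      (fun i => mul_nonneg (inv_nonneg.2 hS0) (by linarith [hw i]))
      (by rw [← Finset.mul_sum, ← hS, inv_mul_cancel₀ h0.ne'])
    have h1 := hf2 y hyK
    have h2 : ∑ i, S⁻¹ * -f (Pi.single i 1) * y i = S⁻¹ * - f y := by
      rw [hfe y, ← Finset.sum_neg_distrib, Finset.mul_sum]
      exact Finset.sum_congr rfl fun i _ => by ring
    rw [h2, ← mul_le_mul_iff_right₀ h0, mul_inv_cancel_left₀ h0.ne'] at hy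
    linarith

section net
variable {X : Type*} [MetricSpace X] [CompactSpace X]
  {F : X → Set (X →₀ ℝ)} {r : X → ℝ}

lemma Lp.cont {f : X → ℝ} (h : Lp 1 f) : Continuous f := by
  have : LipschitzWith 1 f := LipschitzWith.of_dist_le_mul fun x y => by
    simpa [Real.dist_eq] using h x y
  exact this.continuous

lemma net (x0 : X) {η : ℝ} (hη : 0 < η) : ∃ t : Set (X → ℝ), t.Finite ∧ (∀ f ∈ t, Lp 1 f) ∧
    ∀ f, Lp 1 f → ∃ g ∈ t, ∀ x, |f x - f x0 - g x| ≤ η := by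
  let S : Set (BoundedContinuousFunction X ℝ) := {f | Lp 1 f ∧ f x0 = 0}
  have hcomp : IsCompact (closure S) := by
    refine BoundedContinuousFunction.arzela_ascoli
      (Icc (-Metric.diam (univ : Set X)) (Metric.diam (univ : Set X))) isCompact_Icc _ ?_ ?_
    · rintro f x ⟨hf, hf0⟩
      have h1 := hf x x0
      rw [hf0, sub_zero, one_mul] at h1
      exact abs_le.1 (h1.trans (Metric.dist_le_diam_of_mem isCompact_univ.isBounded (mem_univ _) (mem_univ _)))
    · intro x1
      rw [Metric.equicontinuousAt_iff]
      intro e he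
      refine ⟨e, he, ?_⟩
      rintro x hx ⟨f, hf, hf0⟩
      rw [Real.dist_eq]
      have := hf x1 x
      rw [dist_comm, one_mul] at this
      exact this.trans_lt hx
  obtain ⟨t, htS, htf, htc⟩ := Metric.finite_approx_of_totallyBounded
    (hcomp.totallyBounded.subset subset_closure) η hη
  refine ⟨(fun f : BoundedContinuousFunction X ℝ => (f : X → ℝ)) '' t, htf.image _, ?_, ?_⟩
  · rintro _ ⟨f, hf, rfl⟩
    exact (htS hf).1
  · intro f hf
    have hg : Lp 1 (fun x => f x - f x0) := fun x y => by simpa using hf x y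
    let g : BoundedContinuousFunction X ℝ := BoundedContinuousFunction.mkOfCompact ⟨_, hg.cont⟩
    have hgS : g ∈ S := ⟨hg, by change f x0 - f x0 = 0; simp⟩
    have := htc hgS
    simp only [mem_iUnion, Metric.mem_ball] at this
    obtain ⟨h, hht, hd⟩ := this
    refine ⟨_, ⟨h, hht, rfl⟩, fun x => ?_⟩
    have := (BoundedContinuousFunction.dist_coe_le_dist (f := g) (g := h) x).trans hd.le
    rwa [Real.dist_eq] at this

lemma step (hFne : ∀ x, (F x).Nonempty) (hFΔ : ∀ x, F x ⊆ Δf X) (hexp : NE F) (x0 : X)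
    {A : Type*} {U : Filter A} [U.NeBot] {p q : A → X →₀ ℝ} {φ ψ : (X → ℝ) → ℝ}
    (hp : ∀ a, p a ∈ Δf X) (hq : ∀ a, q a ∈ Fhat F (p a))
    (hφ : ∀ f, Bd f → Filter.Tendsto (fun a => E (p a) f) U (nhds (φ f)))
    (hψ : ∀ f, Bd f → Filter.Tendsto (fun a => E (q a) f) U (nhds (ψ f)))
    {u : X →₀ ℝ} (hu : u ∈ Δf X) {η η' : ℝ} (h : ∀ f, Lp 1 f → φ f - E u f ≤ η) (hη : η < η') :
    ∃ v ∈ Fhat F u, ∀ f, Lp 1 f → ψ f - E v f ≤ η' := by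
  set κ := (η' - η) / 4 with hκ
  have hκ0 : 0 < κ := by rw [hκ]; linarith
  obtain ⟨t, htf, htL, htn⟩ := net x0 hκ0
  have hqm : ∀ a, q a ∈ Δf X := fun a => Fhat_sub hFΔ (hp a) (hq a)
  have : Fintype t := htf.fintype
  have : Nonempty t := by
    obtain ⟨g, hg, -⟩ := htn (fun _ => 0) (fun x y => by simp)
    exact ⟨⟨g, hg⟩⟩
  have hK : Convex ℝ ((fun v => fun i : t => E v (i : X → ℝ) - ψ i) '' Fhat F u) := by
    rintro _ ⟨v, hv, rfl⟩ _ ⟨w, hw, rfl⟩ a b ha hb hab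
    refine ⟨a • v + b • w, Fhat_convex hu.1 hv hw ha hb hab, ?_⟩
    ext i
    simp only [E_add, E_smul, Pi.add_apply, Pi.smul_apply, smul_eq_mul]
    have hb' : b = 1 - a := by linarith
    subst hb'
    ring
  obtain ⟨_, ⟨v, hv, rfl⟩, hvi⟩ := minimax hK (c := -η - κ) (by
    intro l hl hl1
    have hfL : Lp 1 (fun x => ∑ i : t, l i * (i : X → ℝ) x) := by
      intro x y
      rw [← Finset.sum_sub_distrib]
      refine (Finset.abs_sum_le_sum_abs _ _).trans ?_
      calc ∑ i : t, |l i * (i : X → ℝ) x - l i * (i : X → ℝ) y| ≤ ∑ i : t, l i * (1 * dist x y) := by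
            refine Finset.sum_le_sum fun i _ => ?_
            rw [← mul_sub, abs_mul, abs_of_nonneg (hl i)]
            exact mul_le_mul_of_nonneg_left (htL i i.2 x y) (hl i)
        _ = 1 * dist x y := by rw [← Finset.sum_mul, hl1, one_mul]
    obtain ⟨v, hv, hvT⟩ := Fhat_near_T hFne (fun x => ∑ i : t, l i * (i : X → ℝ) x) hu hκ0
    refine ⟨_, ⟨v, hv, rfl⟩, ?_⟩
    have hTL := T_Lp hFne hFΔ hexp zero_le_one hfL
    have h1 := h _ hTL
    have h2 : ψ (fun x => ∑ i : t, l i * (i : X → ℝ) x) ≤ φ (T F (fun x => ∑ i : t, l i * (i : X → ℝ) x)) :=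
      le_of_tendsto_of_tendsto' (hψ _ (hfL.bd zero_le_one)) (hφ _ (hTL.bd zero_le_one))
        fun a => Fhat_le_T hFΔ (hfL.bd zero_le_one) (hp a).1 (hq a)
    have h3 : ψ (fun x => ∑ i : t, l i * (i : X → ℝ) x) = ∑ i : t, l i * ψ i := by
      refine tendsto_nhds_unique (hψ _ (hfL.bd zero_le_one)) ?_
      simp only [E_fsum, E_fmul]
      exact tendsto_finsetSum _ fun i _ => (hψ _ ((htL i i.2).bd zero_le_one)).const_mul _
    have h4 : E v (fun x => ∑ i : t, l i * (i : X → ℝ) x) = ∑ i : t, l i * E v i := by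
      simp only [E_fsum, E_fmul]
    simp only [mul_sub, Finset.sum_sub_distrib]
    rw [← h3, ← h4]
    linarith) hκ0
  refine ⟨v, hv, fun f hf => ?_⟩
  have hvm := Fhat_sub hFΔ hu hv
  obtain ⟨g, hg, hfg⟩ := htn f hf
  have h1 := hvi ⟨g, hg⟩
  dsimp only at h1
  have key : ∀ w ∈ Δf X, |E w f - f x0 - E w g| ≤ κ := by
    intro w hw
    have h5 := E_abs_le hw hfg
    rwa [E_fsub, E_fsub, E_const hw] at h5
  have h2 := key v hvm
  have h3 : ψ f - f x0 - ψ g ≤ κ :=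
    le_of_tendsto' (((hψ _ (hf.bd zero_le_one)).sub_const _).sub (hψ _ ((htL g hg).bd zero_le_one)))
      fun a => (abs_le.1 (key _ (hqm a))).2
  have h6 := abs_le.1 h2
  have : η' = η + 4 * κ := by rw [hκ]; ring
  linarith

lemma realize (hFne : ∀ x, (F x).Nonempty) (hFΔ : ∀ x, F x ⊆ Δf X) (hexp : NE F) (x : X)
    {A : Type*} {U : Filter A} [U.NeBot] {s : A → ℕ → X →₀ ℝ} {φ : ℕ → (X → ℝ) → ℝ}
    (hs : ∀ a, Ch F (s a)) (hs0 : ∀ a, s a 0 = Finsupp.single x 1)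
    (hφ : ∀ t f, Bd f → Filter.Tendsto (fun a => E (s a t) f) U (nhds (φ t f)))
    {δ : ℝ} (hδ : 0 < δ) :
    ∃ u, Ch F u ∧ u 0 = Finsupp.single x 1 ∧ ∀ t f, Lp 1 f → φ t f - E (u t) f ≤ δ := by
  have hm : ∀ a t, s a t ∈ Δf X := fun a t => (hs a).mem hFΔ (by rw [hs0]; exact single_mem x) t
  let e : ℕ → ℝ := fun t => δ * (1 - (1/2)^t)
  have he : ∀ t, e t < e (t + 1) := by
    intro t
    have : (0:ℝ) < (1/2)^t := by positivity
    simp only [e, pow_succ]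
    nlinarith
  let P : ℕ → Type _ := fun t => {u : X →₀ ℝ // u ∈ Δf X ∧ ∀ f, Lp 1 f → φ t f - E u f ≤ e t}
  have hstep : ∀ t (u : P t), ∃ v : P (t + 1), v.1 ∈ Fhat F u.1 := by
    rintro t ⟨u, hu, h⟩
    obtain ⟨v, hv, h'⟩ := step hFne hFΔ hexp x (fun a => hm a t) (fun a => hs a t) (hφ t) (hφ (t+1)) hu h (he t)
    exact ⟨⟨v, Fhat_sub hFΔ hu hv, h'⟩, hv⟩
  choose nx hnx using hstep
  have h0 : ∀ f, Lp 1 f → φ 0 f - E (Finsupp.single x 1) f ≤ e 0 := by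
    intro f hf
    have : φ 0 f = E (Finsupp.single x 1) f := by
      refine tendsto_nhds_unique (hφ 0 f (hf.bd zero_le_one)) ?_
      simp only [hs0]
      exact tendsto_const_nhds
    rw [this]
    simp [e]
  let u : ∀ t, P t := fun t => Nat.rec (motive := P) ⟨_, single_mem x, h0⟩ nx t
  refine ⟨fun t => (u t).1, fun t => hnx t (u t), rfl, fun t f hf => ((u t).2.2 f hf).trans ?_⟩
  have : (0:ℝ) < (1/2)^t := by positivity
  simp only [e]
  nlinarith

end net
end Stmt15


namespace Stmt15
set_option linter.unusedSectionVars false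

lemma eval_mix {ι : Type*} [Fintype ι] {θ : ι → ℕ → ℝ} {α : ℝ} (hθ : ∀ i, IsEval (θ i))
    (hα : ∀ i, impatience (θ i) ≤ α) {l : ι → ℝ} (hl : ∀ i, 0 ≤ l i) (hl1 : ∑ i, l i = 1) :
    IsEval (fun t => ∑ i, l i * θ i t) ∧ impatience (fun t => ∑ i, l i * θ i t) ≤ α := by
  have he : IsEval (fun t => ∑ i, l i * θ i t) := by
    refine ⟨fun t => Finset.sum_nonneg fun i _ => mul_nonneg (hl i) ((hθ i).1 t), ?_⟩
    have := hasSum_sum (s := Finset.univ) (f := fun i t => l i * θ i t) fun i _ => (hθ i).hasSum.mul_left (l i)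
    simp only [mul_one, hl1] at this
    exact this.tsum_eq
  refine ⟨he, ?_⟩
  have h1 := hasSum_sum (s := Finset.univ) (f := fun i t => l i * |θ i (t + 1) - θ i t|)
    fun i _ => (hθ i).imp_summable.hasSum.mul_left (l i)
  refine (he.imp_summable.tsum_le_tsum (fun t => ?_) h1.summable).trans ?_
  · change |∑ i, l i * θ i (t + 1) - ∑ i, l i * θ i t| ≤ ∑ i, l i * |θ i (t + 1) - θ i t|
    rw [← Finset.sum_sub_distrib]
    refine (Finset.abs_sum_le_sum_abs _ _).trans (Finset.sum_le_sum fun i _ => ?_)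
    rw [← mul_sub, abs_mul, abs_of_nonneg (hl i)]
  · rw [h1.tsum_eq]
    calc _ ≤ ∑ i, l i * α := Finset.sum_le_sum fun i _ => mul_le_mul_of_nonneg_left (hα i) (hl i)
      _ = α := by rw [← Finset.sum_mul, hl1, one_mul]

section unif
variable {X : Type*} [MetricSpace X] [CompactSpace X] [MeasurableSpace X] [BorelSpace X]
  {F : X → Set (X →₀ ℝ)} {r : X → ℝ}

lemma play_convex (hFΔ : ∀ x, F x ⊆ Δf X) {x : X} {σ τ : ℕ → X →₀ ℝ} (h : IsPlay F x σ) (h' : IsPlay F x τ)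
    {a b : ℝ} (ha : 0 ≤ a) (hb : 0 ≤ b) (hab : a + b = 1) : IsPlay F x (fun t => a • σ t + b • τ t) := by
  refine ⟨convex_convexHull ℝ _ h.1 h'.1 ha hb hab, fun t => ?_⟩
  refine Fhat_add (fun y => ?_) (fun y => ?_) (Fhat_smul a (h.2 t)) (Fhat_smul b (h'.2 t))
  · exact mul_nonneg ha ((play_mem hFΔ h t).1 y)
  · exact mul_nonneg hb ((play_mem hFΔ h' t).1 y)

lemma fin_play (hFne : ∀ x, (F x).Nonempty) (hFΔ : ∀ x, F x ⊆ Δf X) (hr01 : ∀ x, r x ∈ Icc (0:ℝ) 1)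
    {ι : Type*} [Fintype ι] {θ : ι → ℕ → ℝ} {α : ℝ} (hθ : ∀ i, IsEval (θ i))
    (hα : ∀ i, impatience (θ i) ≤ α) {x : X} {c : ℝ}
    (hc : ∀ θ, IsEval θ → impatience θ ≤ α → c ≤ value F r θ x) {η : ℝ} (hη : 0 < η) :
    ∃ σ, IsPlay F x σ ∧ ∀ i, c - η ≤ payoff r (θ i) σ := by
  rcases isEmpty_or_nonempty ι with hι | hι
  · obtain ⟨σ, hσ⟩ := exists_play hFne x
    exact ⟨σ, hσ, fun i => hι.elim i⟩
  have hK : Convex ℝ ((fun σ => fun i : ι => payoff r (θ i) σ) '' {σ | IsPlay F x σ}) := by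
    rintro _ ⟨σ, hσ, rfl⟩ _ ⟨τ, hτ, rfl⟩ a b ha hb hab
    refine ⟨fun t => a • σ t + b • τ t, play_convex hFΔ hσ hτ ha hb hab, ?_⟩
    ext i
    simp only [Pi.add_apply, Pi.smul_apply, smul_eq_mul, pay_eq]
    have s1 := pay_summable hr01 (hθ i) (play_mem hFΔ hσ)
    have s2 := pay_summable hr01 (hθ i) (play_mem hFΔ hτ)
    rw [← tsum_mul_left, ← tsum_mul_left, ← (s1.mul_left a).tsum_add (s2.mul_left b)]
    refine tsum_congr fun t => ?_
    rw [E_add, E_smul, E_smul]; ring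
  obtain ⟨_, ⟨σ, hσ, rfl⟩, h⟩ := minimax hK (c := c - η / 2) (by
    intro l hl hl1
    obtain ⟨h1, h2⟩ := eval_mix hθ hα hl hl1
    obtain ⟨σ, hσ, h3⟩ := exists_near_val (r := r) hFne (fun t => ∑ i, l i * θ i t) x (half_pos hη)
    refine ⟨_, ⟨σ, hσ, rfl⟩, ?_⟩
    have h4 := hc _ h1 h2
    have h5 : payoff r (fun t => ∑ i, l i * θ i t) σ = ∑ i, l i * payoff r (θ i) σ := by
      have := hasSum_sum (s := Finset.univ) (f := fun i t => l i * (θ i t * E (σ t) r))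
        fun i _ => (pay_summable hr01 (hθ i) (play_mem hFΔ hσ)).hasSum.mul_left (l i)
      simp only [pay_eq]
      rw [← this.tsum_eq]
      refine tsum_congr fun t => ?_
      rw [Finset.sum_mul]
      exact Finset.sum_congr rfl fun i _ => by ring
    dsimp only
    rw [← h5]
    linarith) (half_pos hη)
  exact ⟨σ, hσ, fun i => by have := h i; dsimp only at this; linarith⟩

lemma exists_ulim {A : Type*} (U : Ultrafilter A) {s : A → X →₀ ℝ} (hs : ∀ a, s a ∈ Δf X) :
    ∃ φ : (X → ℝ) → ℝ, ∀ f, Bd f → Filter.Tendsto (fun a => E (s a) f) U (nhds (φ f)) := by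
  have : ∀ f : X → ℝ, ∃ y : ℝ, Bd f → Filter.Tendsto (fun a => E (s a) f) U (nhds y) := by
    intro f
    by_cases hf : Bd f
    · obtain ⟨B, hB⟩ := hf
      obtain ⟨y, -, hy⟩ := (isCompact_Icc (a := -B) (b := B)).ultrafilter_le_nhds
        (U.map (fun a => E (s a) f)) (by
          rw [Filter.le_principal_iff]
          have hall : ∀ a, E (s a) f ∈ Icc (-B) B := fun a => abs_le.1 (E_abs_le (hs a) hB)
          exact Filter.mem_map.2 (Filter.univ_mem' hall))
      exact ⟨y, fun _ => hy⟩
    · exact ⟨0, fun h => absurd h hf⟩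
  choose φ hφ using this
  exact ⟨φ, hφ⟩

theorem uniform (hFne : ∀ x, (F x).Nonempty) (hFΔ : ∀ x, F x ⊆ Δf X) (hexp : NE F)
    (hr : Continuous r) (hr01 : ∀ x, r x ∈ Icc (0:ℝ) 1) :
    ∀ ε > (0:ℝ), ∃ α > (0:ℝ), ∀ x : X, ∃ σ : ℕ → (X →₀ ℝ), IsPlay F x σ ∧
        ∀ θ : ℕ → ℝ, IsEval θ → impatience θ ≤ α → payoff r θ σ ≥ vs F r x - ε := by
  intro ε hε
  obtain ⟨α, hα, hlv⟩ := limit_value hFne hFΔ hexp hr hr01 (ε / 4) (by linarith)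
  refine ⟨α, hα, fun x => ?_⟩
  have hc : ∀ θ, IsEval θ → impatience θ ≤ α → vs F r x - ε / 4 ≤ value F r θ x := by
    intro θ h1 h2
    have := abs_le.1 (hlv θ h1 h2 x)
    linarith
  let Θ := {θ : ℕ → ℝ // IsEval θ ∧ impatience θ ≤ α}
  have hA : ∀ A : Finset Θ, ∃ σ, IsPlay F x σ ∧ ∀ θ ∈ A, vs F r x - ε / 2 ≤ payoff r θ.1 σ := by
    intro A
    obtain ⟨σ, hσ, h⟩ := fin_play (r := r) (ι := A) (θ := fun i => i.1.1) hFne hFΔ hr01 (fun i => i.1.2.1)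
      (fun i => i.1.2.2) hc (η := ε / 4) (by linarith)
    exact ⟨σ, hσ, fun θ hθ => by have := h ⟨θ, hθ⟩; dsimp only at this; linarith⟩
  choose σ hσ hpay using hA
  let U : Ultrafilter (Finset Θ) := Ultrafilter.of Filter.atTop
  have hU : (U : Filter (Finset Θ)) ≤ Filter.atTop := Ultrafilter.of_le _
  let s : Finset Θ → ℕ → X →₀ ℝ := fun A => cons (Finsupp.single x 1) (σ A)
  have hs : ∀ A, Ch F (s A) := fun A => play_cons hFne (hσ A)
  have hs0 : ∀ A, s A 0 = Finsupp.single x 1 := fun A => rfl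
  have hm : ∀ A t, s A t ∈ Δf X := fun a t => (hs a).mem hFΔ (by rw [hs0]; exact single_mem x) t
  have hφ := fun t => exists_ulim U (s := fun A => s A t) (fun A => hm A t)
  choose φ hφ using hφ
  obtain ⟨L, hL, g, hgL, hg⟩ := exists_AL hr (show 0 < ε / 12 by linarith)
  have hL1 : 0 < L + 1 := by linarith
  obtain ⟨u, hu, hu0, hφu⟩ := realize hFne hFΔ hexp x hs hs0 hφ (δ := ε / 12 / (L + 1)) (by positivity)
  have hum : ∀ t, u t ∈ Δf X := hu.mem hFΔ (by rw [hu0]; exact single_mem x)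
  have hplay : IsPlay F x (fun t => u (t + 1)) := chain_play hFne hu hu0
  refine ⟨_, hplay, fun θ h1 h2 => ?_⟩
  have hrb := r_bd hr01
  have hcmp : ∀ t, φ t r - ε / 4 ≤ E (u t) r := by
    intro t
    have hg1 : Lp 1 (fun y => (L + 1)⁻¹ * g y) := by
      intro y z
      rw [← mul_sub, abs_mul, abs_of_pos (inv_pos.2 hL1), inv_mul_le_iff₀ hL1]
      have := hgL y z
      have := dist_nonneg (x := y) (y := z)
      nlinarith
    have hgb : Bd g := hgL.bd hL
    have h3 := hφu t _ hg1
    have h4 : φ t (fun y => (L + 1)⁻¹ * g y) = (L + 1)⁻¹ * φ t g := by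
      refine tendsto_nhds_unique (hφ t _ (hg1.bd zero_le_one)) ?_
      simp only [E_fmul]
      exact (hφ t _ hgb).const_mul _
    rw [h4, E_fmul, ← mul_sub, inv_mul_le_iff₀ hL1, mul_div_cancel₀ _ hL1.ne'] at h3
    have h5 := abs_le.1 (E_sub_abs_le (hum t) hg)
    have h6 : φ t r - φ t g ≤ ε / 12 :=
      le_of_tendsto' ((hφ t r hrb).sub (hφ t g hgb)) fun A => (abs_le.1 (E_sub_abs_le (hm A t) hg)).2
    linarith
  have hφ01 : ∀ t, φ t r ∈ Icc (0:ℝ) 1 := fun t =>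
    isClosed_Icc.mem_of_tendsto (hφ t r hrb) (Filter.Eventually.of_forall fun A => E01 hr01 (hm A t))
  have hlim : Filter.Tendsto (fun A => payoff r θ (σ A)) U (nhds (∑' t, θ t * φ (t + 1) r)) := by
    simp only [pay_eq]
    refine tendsto_tsum_of_dominated_convergence (bound := θ) h1.summable
      (fun t => (hφ (t + 1) r hrb).const_mul _) (Filter.Eventually.of_forall fun A t => ?_)
    have : E (σ A t) r ∈ Icc (0:ℝ) 1 := E01 hr01 (hm A (t + 1))
    rw [Real.norm_eq_abs, abs_mul, abs_of_nonneg (h1.1 t)]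
    refine mul_le_of_le_one_right (h1.1 t) ?_
    exact abs_le.2 ⟨by linarith [this.1], this.2⟩
  have hlow : vs F r x - ε / 2 ≤ ∑' t, θ t * φ (t + 1) r := by
    refine ge_of_tendsto hlim (hU ?_)
    filter_upwards [Filter.eventually_ge_atTop ({⟨θ, h1, h2⟩} : Finset Θ)] with A hA
    exact hpay A ⟨θ, h1, h2⟩ (hA (Finset.mem_singleton_self _))
  have hsφ : Summable (fun t => θ t * φ (t + 1) r) :=
    Summable.of_nonneg_of_le (fun t => mul_nonneg (h1.1 t) (hφ01 _).1)
      (fun t => mul_le_of_le_one_right (h1.1 t) (hφ01 _).2) h1.summable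
  have hfin : ∑' t, (θ t * φ (t + 1) r - θ t * (ε / 4)) ≤ ∑' t, θ t * E (u (t + 1)) r := by
    refine (hsφ.sub (h1.summable.mul_right _)).tsum_le_tsum (fun t => ?_)
      (pay_summable hr01 h1 (fun t => hum (t + 1)))
    have := mul_le_mul_of_nonneg_left (hcmp (t + 1)) (h1.1 t)
    linarith
  rw [hsφ.tsum_sub (h1.summable.mul_right _), tsum_mul_right, h1.2, one_mul] at hfin
  rw [pay_eq]
  linarith

end unif
end Stmt15


/-- **Theorem 3 (Renault–Venel).** A Gambling House `Γ = (X,F,r)` with `X` compact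
metric, `r` continuous and `F` non-expansive for `d_KR` has a general uniform value
`v*`, which is characterized as the infimum, over all continuous affine
`w : Δ(X) → [0,1]` that are (1) excessive and (2) above the payoff on invariant
measures, of `w(δ_x)`. -/
theorem stmt15 (X : Type*) [MetricSpace X] [CompactSpace X]
    [MeasurableSpace X] [BorelSpace X]
    (F : X → Set (X →₀ ℝ)) (hFne : ∀ x, (F x).Nonempty)
    (hFΔ : ∀ x, F x ⊆ Stmt15.Δf X)
    (r : X → ℝ) (hr : Continuous r) (hr01 : ∀ x, r x ∈ Icc (0:ℝ) 1)
    (hexp : ∀ x x' : X, ∀ u ∈ F x, ∃ u' ∈ F x', Stmt15.dKR u u' ≤ dist x x') :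
    ∃ vstar : X → ℝ,
      -- general limit value: uniform convergence of `v_θ` to `v*` as `I(θ) → 0`
      (∀ ε > (0:ℝ), ∃ α > (0:ℝ), ∀ θ : ℕ → ℝ, Stmt15.IsEval θ →
        Stmt15.impatience θ ≤ α →
        ∀ x : X, |Stmt15.value F r θ x - vstar x| ≤ ε) ∧
      -- general uniform value: plays that are simultaneously almost optimal for all
      -- sufficiently patient evaluations
      (∀ ε > (0:ℝ), ∃ α > (0:ℝ), ∀ x : X, ∃ σ : ℕ → (X →₀ ℝ), Stmt15.IsPlay F x σ ∧
        ∀ θ : ℕ → ℝ, Stmt15.IsEval θ → Stmt15.impatience θ ≤ α →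
          Stmt15.payoff r θ σ ≥ vstar x - ε) ∧
      -- characterization of `v*`
      (∀ x : X, vstar x =
        sInf {c : ℝ | ∃ w : ProbabilityMeasure X → ℝ, Continuous w ∧
          (∀ μ, w μ ∈ Icc (0:ℝ) 1) ∧ Stmt15.IsAffine w ∧
          (∀ y : X, ∀ u ∈ F y, ∀ μ : ProbabilityMeasure X,
            (μ : Measure X) = Stmt15.toMeas u →
            w ⟨Measure.dirac y, inferInstance⟩ ≥ w μ) ∧
          (∀ μ ∈ Stmt15.invariantSet F, w μ ≥ ∫ y, r y ∂(μ : Measure X)) ∧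
          c = w ⟨Measure.dirac x, inferInstance⟩}) := by
  exact ⟨Stmt15.vs F r, Stmt15.limit_value hFne hFΔ hexp hr hr01,
    Stmt15.uniform hFne hFΔ hexp hr hr01, fun x => rfl⟩
end
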